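/- There exists a constant C_p > 0 depending only on p such that for all t1, t2 ≥ 0 with t1 ≤ 1, t2 ≤ 1 and t1 + t2 ≤ 1, sup_{x ∈ ℝ} | P( S_n ≤ x · √( t1·⟨S⟩_n + t2·[S]_n + (1 − t1 − t2) ) ) − Φ(x) | ≤ C_p · N_n^{1/(2p+1)}. -/

import Mathlib

open MeasureTheory Filter Finset

/-- The standard normal distribution function
`Φ(x) = (2π)^{-1/2} ∫_{-∞}^x e^{-u²/2} du`. -/
noncomputable def stdNormalCDF (x : ℝ) : ℝ :=
  ∫ u in Set.Iic x, (Real.sqrt (2 * Real.pi))⁻¹ * Real.exp (-u ^ 2 / 2)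

/-- standard normal density -/
noncomputable def nphi (u : ℝ) : ℝ := (Real.sqrt (2 * Real.pi))⁻¹ * Real.exp (-u ^ 2 / 2)

lemma nphi_eq_pdf : nphi = ProbabilityTheory.gaussianPDFReal 0 1 := by
  funext u
  simp [nphi, ProbabilityTheory.gaussianPDFReal]

lemma integrable_nphi : Integrable nphi := by
  rw [nphi_eq_pdf]; exact ProbabilityTheory.integrable_gaussianPDFReal 0 1

lemma nphi_nonneg (u : ℝ) : 0 ≤ nphi u := by unfold nphi; positivity

lemma nphi_continuous : Continuous nphi := by unfold nphi; fun_prop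

lemma sqrt_two_pi_inv_le : (Real.sqrt (2 * Real.pi))⁻¹ ≤ 1 := by
  apply inv_le_one_of_one_le₀
  rw [Real.one_le_sqrt]
  nlinarith [Real.pi_gt_three]

lemma nphi_le (u : ℝ) : nphi u ≤ Real.exp (-u ^ 2 / 2) := by
  unfold nphi
  have := Real.exp_pos (-u ^ 2 / 2)
  nlinarith [sqrt_two_pi_inv_le]

lemma nphi_le_one (u : ℝ) : nphi u ≤ 1 := by
  refine (nphi_le u).trans ?_
  rw [Real.exp_le_one_iff]; nlinarith [sq_nonneg u]

lemma cdf_eq_real (x : ℝ) : stdNormalCDF x = (ProbabilityTheory.gaussianReal 0 1).real (Set.Iic x) := by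
  rw [Measure.real, ProbabilityTheory.gaussianReal_apply_eq_integral 0 one_ne_zero]
  rw [ENNReal.toReal_ofReal]
  · rw [← nphi_eq_pdf]; rfl
  · exact integral_nonneg fun u => ProbabilityTheory.gaussianPDFReal_nonneg _ _ _

lemma cdf_nonneg (x : ℝ) : 0 ≤ stdNormalCDF x := by rw [cdf_eq_real]; exact measureReal_nonneg
lemma cdf_le_one (x : ℝ) : stdNormalCDF x ≤ 1 := by rw [cdf_eq_real]; exact measureReal_le_one
lemma cdf_mono : Monotone stdNormalCDF := by
  intro a b h
  rw [cdf_eq_real, cdf_eq_real]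
  exact measureReal_mono (Set.Iic_subset_Iic.2 h)

lemma cdf_hasDeriv (x : ℝ) : HasDerivAt stdNormalCDF (nphi x) x := by
  have h : stdNormalCDF = fun y => stdNormalCDF 0 + ∫ u in (0:ℝ)..y, nphi u := by
    funext y
    rw [← intervalIntegral.integral_Iic_sub_Iic integrable_nphi.integrableOn
      integrable_nphi.integrableOn]
    simp only [stdNormalCDF, nphi]; ring
  rw [h]
  exact (intervalIntegral.integral_hasDerivAt_right (nphi_continuous.intervalIntegrable _ _)
    nphi_continuous.stronglyMeasurable.stronglyMeasurableAtFilter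
    nphi_continuous.continuousAt).const_add _

lemma cdf_measurable : Measurable stdNormalCDF := cdf_mono.measurable

lemma nphi_hasDeriv (x : ℝ) : HasDerivAt nphi (-x * nphi x) x := by
  unfold nphi
  have h : HasDerivAt (fun u : ℝ => -u ^ 2 / 2) (-x) x := by
    have := ((hasDerivAt_pow 2 x).neg.div_const 2)
    exact this.congr_deriv (by simp; ring)
  exact (h.exp.const_mul ((Real.sqrt (2 * Real.pi))⁻¹)).congr_deriv (by ring)

lemma cdf_tail_aux (y : ℝ) (hy : 0 < y) :
    (ProbabilityTheory.gaussianReal 0 1).real {u | y ≤ |u|} ≤ 1 / y ^ 2 := by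
  have h := ProbabilityTheory.meas_ge_le_variance_div_sq (μ := ProbabilityTheory.gaussianReal 0 1)
    (X := id) (ProbabilityTheory.memLp_id_gaussianReal 2) hy
  rw [ProbabilityTheory.variance_id_gaussianReal] at h
  simp at h
  rw [Measure.real]
  refine ENNReal.toReal_le_of_le_ofReal (by positivity) (h.trans (le_of_eq ?_))
  simp

lemma cdf_left_tail (y : ℝ) (hy : 0 < y) : stdNormalCDF (-y) ≤ 1 / y ^ 2 := by
  rw [cdf_eq_real]
  refine le_trans (measureReal_mono ?_) (cdf_tail_aux y hy)
  intro u hu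
  simp only [Set.mem_Iic] at hu
  simp only [Set.mem_ofPred_eq]
  rw [abs_of_neg (by linarith)]; linarith

lemma cdf_right_tail (y : ℝ) (hy : 0 < y) : 1 - stdNormalCDF y ≤ 1 / y ^ 2 := by
  rw [cdf_eq_real, ← probReal_compl_eq_one_sub measurableSet_Iic]
  refine le_trans (measureReal_mono ?_) (cdf_tail_aux y hy)
  intro u hu
  simp only [Set.mem_compl_iff, Set.mem_Iic, not_le] at hu
  simp only [Set.mem_ofPred_eq]
  rw [abs_of_pos (by linarith)]; linarith

lemma cdf_lipschitz (x y : ℝ) : |stdNormalCDF x - stdNormalCDF y| ≤ |x - y| := by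
  have := Convex.norm_image_sub_le_of_norm_hasDerivWithin_le (f := stdNormalCDF) (f' := nphi)
    (s := Set.univ) (C := 1) (x := y) (y := x) (fun u _ => (cdf_hasDeriv u).hasDerivWithinAt)
    (fun u _ => by rw [Real.norm_eq_abs, abs_of_nonneg (nphi_nonneg u)]; exact nphi_le_one u)
    convex_univ trivial trivial
  simpa using this

/-- first order mean value bound on `[0,1]` -/
lemma mvt01 (f f' : ℝ → ℝ) (M : ℝ) (hf : ∀ s ∈ Set.Icc (0:ℝ) 1, HasDerivAt f (f' s) s)
    (hM : ∀ s ∈ Set.Icc (0:ℝ) 1, |f' s| ≤ M) : ∀ s ∈ Set.Icc (0:ℝ) 1, |f s - f 0| ≤ M := by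
  intro s hs
  have := Convex.norm_image_sub_le_of_norm_hasDerivWithin_le (f := f) (f' := f')
    (s := Set.Icc (0:ℝ) 1) (C := M) (x := 0) (y := s) (fun u hu => (hf u hu).hasDerivWithinAt)
    hM (convex_Icc _ _) (by simp) hs
  simp only [Real.norm_eq_abs, sub_zero] at this
  have hM0 : 0 ≤ M := (abs_nonneg _).trans (hM 0 (by simp))
  rw [abs_of_nonneg hs.1] at this
  nlinarith [hs.2]

lemma taylor2_01 (f f1 f2 : ℝ → ℝ) (M : ℝ) (hf : ∀ s ∈ Set.Icc (0:ℝ) 1, HasDerivAt f (f1 s) s)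
    (hf1 : ∀ s ∈ Set.Icc (0:ℝ) 1, HasDerivAt f1 (f2 s) s)
    (hM : ∀ s ∈ Set.Icc (0:ℝ) 1, |f2 s| ≤ M) :
    ∀ s ∈ Set.Icc (0:ℝ) 1, |f s - f 0 - s * f1 0| ≤ M := by
  have h1 := mvt01 f1 f2 M hf1 hM
  have h2 := mvt01 (fun s => f s - s * f1 0) (fun s => f1 s - f1 0) M
    (fun s hs => ((hf s hs).sub ((hasDerivAt_id s).mul_const (f1 0))).congr_deriv (by simp)) h1
  intro s hs
  have := h2 s hs
  simp only [zero_mul, sub_zero] at this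
  convert this using 2; ring

lemma taylor3_01 (f f1 f2 f3 : ℝ → ℝ) (M : ℝ)
    (hf : ∀ s ∈ Set.Icc (0:ℝ) 1, HasDerivAt f (f1 s) s)
    (hf1 : ∀ s ∈ Set.Icc (0:ℝ) 1, HasDerivAt f1 (f2 s) s)
    (hf2 : ∀ s ∈ Set.Icc (0:ℝ) 1, HasDerivAt f2 (f3 s) s)
    (hM : ∀ s ∈ Set.Icc (0:ℝ) 1, |f3 s| ≤ M) :
    |f 1 - f 0 - f1 0 - 1 / 2 * f2 0| ≤ M := by
  have h1 := taylor2_01 f1 f2 f3 M hf1 hf2 hM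
  have h2 := mvt01 (fun s => f s - s * f1 0 - s ^ 2 / 2 * f2 0)
    (fun s => f1 s - f1 0 - s * f2 0) M
    (fun s hs => by
      have h := ((hf s hs).sub ((hasDerivAt_id s).mul_const (f1 0))).sub
        (((hasDerivAt_pow 2 s).div_const 2).mul_const (f2 0))
      exact h.congr_deriv (by simp)) h1
  have := h2 1 (by simp)
  simp only [zero_mul, sub_zero] at this
  convert this using 2; ring

lemma one_add_sq_le (t c : ℝ) (hc : 1 ≤ c) : 1 + t ^ 2 ≤ c * Real.exp (t ^ 2 / c) := by
  have h := Real.add_one_le_exp (t ^ 2 / c)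
  have hc0 : 0 < c := by linarith
  have : c * (t ^ 2 / c + 1) = t ^ 2 + c := by field_simp
  nlinarith

lemma nphi1_bound (t : ℝ) : |-t * nphi t| ≤ 1 := by
  rw [abs_mul, abs_neg, abs_of_nonneg (nphi_nonneg t)]
  have h1 : |t| ≤ Real.exp (t ^ 2 / 2) := by
    have := Real.add_one_le_exp (t ^ 2 / 2)
    nlinarith [sq_nonneg (|t| - 1), sq_abs t]
  have h2 := nphi_le t
  calc |t| * nphi t ≤ Real.exp (t ^ 2 / 2) * Real.exp (-t ^ 2 / 2) := by
        gcongr; exact nphi_nonneg t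
    _ = 1 := by rw [← Real.exp_add]; simp; ring

lemma nphi2_hasDeriv (x : ℝ) : HasDerivAt (fun t => -t * nphi t) ((x ^ 2 - 1) * nphi x) x := by
  have := ((hasDerivAt_id x).neg).mul (nphi_hasDeriv x)
  exact this.congr_deriv (by simp; ring)

lemma nphi_poly_bound (t : ℝ) : (1 + t ^ 2) ^ 2 * nphi t ≤ 256 * Real.exp (- 3 * t ^ 2 / 8) := by
  have h := one_add_sq_le t 16 (by norm_num)
  have h2 : (1 + t ^ 2) ^ 2 ≤ 256 * Real.exp (t ^ 2 / 8) := by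
    calc (1 + t ^ 2) ^ 2 ≤ (16 * Real.exp (t ^ 2 / 16)) ^ 2 := by gcongr
      _ = 256 * Real.exp (t ^ 2 / 8) := by
        rw [mul_pow, ← Real.exp_nat_mul]; norm_num; ring
  calc (1 + t ^ 2) ^ 2 * nphi t ≤ (256 * Real.exp (t ^ 2 / 8)) * Real.exp (-t ^ 2 / 2) := by
        gcongr
        · exact nphi_nonneg t
        · exact nphi_le t
    _ = 256 * Real.exp (- 3 * t ^ 2 / 8) := by
        rw [mul_assoc, ← Real.exp_add]; congr 2; ring

lemma exp_decay (κ : ℝ) (hκ : 0 < κ) : ∃ C : ℝ, 0 < C ∧ ∀ y : ℝ,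
    Real.exp (-y ^ 2 / 8) ≤ C * (1 + y ^ 2) ^ (-κ) := by
  refine ⟨(8 * κ) ^ κ * Real.exp (1 / 8), by positivity, fun y => ?_⟩
  have h1 : (1 + y ^ 2) ≤ 8 * κ * Real.exp ((1 + y ^ 2) / (8 * κ)) := by
    have := Real.add_one_le_exp ((1 + y ^ 2) / (8 * κ))
    have h3 : 8 * κ * ((1 + y ^ 2) / (8 * κ)) = 1 + y ^ 2 := by field_simp
    nlinarith
  have h2 : (1 + y ^ 2) ^ κ ≤ (8 * κ) ^ κ * Real.exp ((1 + y ^ 2) / 8) := by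
    calc (1 + y ^ 2) ^ κ ≤ (8 * κ * Real.exp ((1 + y ^ 2) / (8 * κ))) ^ κ := by gcongr
      _ = _ := by
        rw [Real.mul_rpow (by positivity) (by positivity), ← Real.exp_mul]
        congr 2; field_simp
  rw [Real.rpow_neg (by positivity), ← div_eq_mul_inv, le_div_iff₀ (by positivity)]
  calc Real.exp (-y ^ 2 / 8) * (1 + y ^ 2) ^ κ
      ≤ Real.exp (-y ^ 2 / 8) * ((8 * κ) ^ κ * Real.exp ((1 + y ^ 2) / 8)) := by gcongr
    _ = (8 * κ) ^ κ * (Real.exp (-y ^ 2 / 8) * Real.exp ((1 + y ^ 2) / 8)) := by ring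
    _ = _ := by rw [← Real.exp_add]; congr 2; ring

lemma taylor_T1 (y h : ℝ) :
    |stdNormalCDF (y + h) - stdNormalCDF y - nphi y * h - 1 / 2 * (-y * nphi y) * h ^ 2|
      ≤ 2 * h ^ 2 := by
  have hd : ∀ s : ℝ, HasDerivAt (fun s => y + s * h) h s := fun s => by
    simpa using ((hasDerivAt_id s).mul_const h).const_add y
  have := taylor2_01 (fun s => stdNormalCDF (y + s * h)) (fun s => nphi (y + s * h) * h)
    (fun s => (-(y + s * h) * nphi (y + s * h) * h) * h) (h ^ 2)
    (fun s _ => (cdf_hasDeriv _).comp s (hd s))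
    (fun s _ => ((nphi_hasDeriv _).comp s (hd s)).mul_const h)
    (fun s _ => by
      rw [mul_assoc, abs_mul, ← sq, abs_of_nonneg (sq_nonneg h)]
      nlinarith [nphi1_bound (y + s * h), sq_nonneg h]) 1 (by simp)
  simp only [one_mul, zero_mul, add_zero] at this
  have h3 := nphi1_bound y
  rw [abs_le] at *
  constructor <;> nlinarith [sq_nonneg h]

lemma taylor_T2 (κ : ℝ) (hκ : 0 < κ) : ∃ C : ℝ, 0 < C ∧ ∀ y h : ℝ, |h| ≤ 1 →
    |stdNormalCDF (y + h) - stdNormalCDF y - nphi y * h - 1 / 2 * (-y * nphi y) * h ^ 2|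
      ≤ C * |h| ^ 3 * (1 + y ^ 2) ^ (-κ) := by
  obtain ⟨C, hC, hCy⟩ := exp_decay κ hκ
  refine ⟨256 * Real.exp (1 / 4) * C, by positivity, fun y h hh => ?_⟩
  have hd : ∀ s : ℝ, HasDerivAt (fun s => y + s * h) h s := fun s => by
    simpa using ((hasDerivAt_id s).mul_const h).const_add y
  have hB : ∀ t : ℝ, |t - y| ≤ 1 → |(t ^ 2 - 1) * nphi t| ≤ 256 * Real.exp (1 / 4) * C * (1 + y ^ 2) ^ (-κ) := by
    intro t ht
    rw [abs_mul, abs_of_nonneg (nphi_nonneg t)]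
    have h1 : |t ^ 2 - 1| ≤ (1 + t ^ 2) ^ 2 := by
      rw [abs_le]; constructor <;> nlinarith [sq_nonneg t]
    have h2 : y ^ 2 / 2 - 1 ≤ t ^ 2 := by
      rw [abs_le] at ht
      nlinarith [sq_nonneg (2 * t - y)]
    calc |t ^ 2 - 1| * nphi t ≤ (1 + t ^ 2) ^ 2 * nphi t := by gcongr; exact nphi_nonneg t
      _ ≤ 256 * Real.exp (- 3 * t ^ 2 / 8) := nphi_poly_bound t
      _ ≤ 256 * Real.exp (1 / 4 + -y ^ 2 / 8) := by
          gcongr; nlinarith [sq_nonneg t]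
      _ = 256 * Real.exp (1 / 4) * Real.exp (-y ^ 2 / 8) := by rw [Real.exp_add]; ring
      _ ≤ 256 * Real.exp (1 / 4) * (C * (1 + y ^ 2) ^ (-κ)) := by gcongr; exact hCy y
      _ = _ := by ring
  have := taylor3_01 (fun s => stdNormalCDF (y + s * h)) (fun s => nphi (y + s * h) * h)
    (fun s => (-(y + s * h) * nphi (y + s * h) * h) * h)
    (fun s => (((y + s * h) ^ 2 - 1) * nphi (y + s * h) * h * h) * h)
    (256 * Real.exp (1 / 4) * C * |h| ^ 3 * (1 + y ^ 2) ^ (-κ))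
    (fun s _ => (cdf_hasDeriv _).comp s (hd s))
    (fun s _ => ((nphi_hasDeriv _).comp s (hd s)).mul_const h)
    (fun s _ => (((nphi2_hasDeriv _).comp s (hd s)).mul_const h).mul_const h)
    (fun s hs => by
      have h5 := hB (y + s * h) (by
        rw [add_sub_cancel_left, abs_mul, abs_of_nonneg hs.1]
        nlinarith [hs.2, abs_nonneg h, hs.1])
      have h6 : |(((y + s * h) ^ 2 - 1) * nphi (y + s * h) * h * h) * h|
        = |((y + s * h) ^ 2 - 1) * nphi (y + s * h)| * |h| ^ 3 := by
        rw [abs_mul, abs_mul, abs_mul]; ring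
      rw [h6]
      calc _ ≤ (256 * Real.exp (1 / 4) * C * (1 + y ^ 2) ^ (-κ)) * |h| ^ 3 := by gcongr
        _ = _ := by ring)
  simp only [one_mul, zero_mul, add_zero] at this
  convert this using 2; ring

lemma time_hasDeriv (y w s : ℝ) (hw : 0 ≤ w) (hs : 0 ≤ s) :
    HasDerivAt (fun s => y / Real.sqrt (1 + s * w))
      (-(1 / 2) * (y / Real.sqrt (1 + s * w)) * (w / (1 + s * w))) s := by
  have hpos : 0 < 1 + s * w := by positivity
  have h1 : HasDerivAt (fun s => 1 + s * w) w s := by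
    simpa using ((hasDerivAt_id s).mul_const w).const_add 1
  have h2 := (h1.sqrt hpos.ne').inv (Real.sqrt_pos.2 hpos).ne'
  have h3 := h2.const_mul y
  simp only [div_eq_mul_inv] at *
  refine h3.congr_deriv ?_
  have hq : Real.sqrt (1 + s * w) ^ 2 = 1 + s * w := Real.sq_sqrt hpos.le
  have hq0 := (Real.sqrt_pos.2 hpos).ne'
  rw [hq]
  field_simp

lemma time_deriv1 (y w s : ℝ) (hw : 0 ≤ w) (hs : 0 ≤ s) :
    HasDerivAt (fun s => stdNormalCDF (y / Real.sqrt (1 + s * w)))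
      (1 / 2 * (-(y / Real.sqrt (1 + s * w)) * nphi (y / Real.sqrt (1 + s * w))) * (w / (1 + s * w))) s := by
  exact ((cdf_hasDeriv _).comp s (time_hasDeriv y w s hw hs)).congr_deriv (by ring)

lemma taylor_T4 (y w : ℝ) (hw : 0 ≤ w) :
    |stdNormalCDF (y / Real.sqrt (1 + w)) - stdNormalCDF y - 1 / 2 * (-y * nphi y) * w|
      ≤ 2 * w := by
  have := mvt01 (fun s => stdNormalCDF (y / Real.sqrt (1 + s * w))) _ w
    (fun s hs => time_deriv1 y w s hw hs.1)
    (fun s hs => by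
      have h1 := nphi1_bound (y / Real.sqrt (1 + s * w))
      have h0 : 0 ≤ s * w := mul_nonneg hs.1 hw
      have h2 : w / (1 + s * w) ≤ w := div_le_self hw (by linarith)
      have h3 : 0 ≤ w / (1 + s * w) := by positivity
      rw [abs_mul, abs_mul, abs_of_nonneg h3]
      rw [abs_of_pos (by norm_num : (0:ℝ) < 1 / 2)]
      nlinarith) 1 (by simp)
  simp only [one_mul, zero_mul, add_zero, Real.sqrt_one, div_one] at this
  have h3 := nphi1_bound y
  rw [abs_le] at *
  constructor <;> nlinarith

lemma taylor_T3 (κ : ℝ) (hκ : 0 < κ) : ∃ C : ℝ, 0 < C ∧ ∀ y w : ℝ, 0 ≤ w → w ≤ 2 →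
    |stdNormalCDF (y / Real.sqrt (1 + w)) - stdNormalCDF y - 1 / 2 * (-y * nphi y) * w|
      ≤ C * w ^ 2 * (1 + y ^ 2) ^ (-κ) := by
  obtain ⟨C, hC, hCy⟩ := exp_decay κ hκ
  refine ⟨512 * C, by positivity, fun y w hw hw2 => ?_⟩
  have h2d : ∀ s : ℝ, 0 ≤ s → HasDerivAt (fun s => 1 / 2 * (-(y / Real.sqrt (1 + s * w)) * nphi (y / Real.sqrt (1 + s * w))) * (w / (1 + s * w)))
     (1 / 2 * ((((y / Real.sqrt (1 + s * w)) ^ 2 - 1) * nphi (y / Real.sqrt (1 + s * w))) * (-(1 / 2) * (y / Real.sqrt (1 + s * w)) * (w / (1 + s * w)))) * (w / (1 + s * w)) + 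
      1 / 2 * (-(y / Real.sqrt (1 + s * w)) * nphi (y / Real.sqrt (1 + s * w))) * (- (w / (1 + s * w)) ^ 2)) s := by
    intro s hs
    have hpos : 0 < 1 + s * w := by positivity
    have h1 : HasDerivAt (fun s => 1 + s * w) w s := by
      simpa using ((hasDerivAt_id s).mul_const w).const_add 1
    have ha := (((nphi2_hasDeriv _).comp s (time_hasDeriv y w s hw hs)).const_mul (1 / 2 : ℝ))
    have hb := (h1.inv hpos.ne').const_mul w
    have hc := ha.mul hb
    simp only [Function.comp_def, div_eq_mul_inv] at *
    refine hc.congr_deriv ?_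
    simp only [Pi.inv_apply]
    field_simp
  have := taylor2_01 (fun s => stdNormalCDF (y / Real.sqrt (1 + s * w))) _ _ (512 * C * w ^ 2 * (1 + y ^ 2) ^ (-κ))
    (fun s hs => time_deriv1 y w s hw hs.1) (fun s hs => h2d s hs.1)
    (fun s hs => by
      have h0 : 0 ≤ s * w := mul_nonneg hs.1 hw
      have h02 : s * w ≤ 2 := by nlinarith [hs.1, hs.2]
      have h2 : w / (1 + s * w) ≤ w := div_le_self hw (by linarith)
      have h3 : 0 ≤ w / (1 + s * w) := by positivity
      set b := w / (1 + s * w) with hb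
      have hy2 : (y / Real.sqrt (1 + s * w)) ^ 2 = y ^ 2 / (1 + s * w) := by
        rw [div_pow, Real.sq_sqrt (by linarith)]
      set t := y / Real.sqrt (1 + s * w) with ht
      have hty : y ^ 2 / 3 ≤ t ^ 2 := by
        rw [hy2]; gcongr; linarith
      have hn := nphi_nonneg t
      have e1 : (1 / 2 * (((t ^ 2 - 1) * nphi t) * (-(1 / 2) * t * b)) * b + 1 / 2 * (-t * nphi t) * (-b ^ 2)) = ((1/4) * t * (3 - t ^ 2)) * (nphi t * b ^ 2) := by ring
      rw [e1, abs_mul, abs_of_nonneg (by positivity : 0 ≤ nphi t * b ^ 2)]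
      have e2 : |(1/4) * t * (3 - t ^ 2)| ≤ 2 * (1 + t ^ 2) ^ 2 := by
        rw [abs_le]; constructor <;> nlinarith [sq_nonneg t, sq_nonneg (t - 1), sq_nonneg (t + 1), sq_nonneg (t ^ 2 - t), sq_nonneg (t ^ 2 + t)]
      have e3 : b ^ 2 ≤ w ^ 2 := by gcongr
      calc _ ≤ 2 * (1 + t ^ 2) ^ 2 * (nphi t * w ^ 2) := by gcongr
        _ = 2 * ((1 + t ^ 2) ^ 2 * nphi t) * w ^ 2 := by ring
        _ ≤ 2 * (256 * Real.exp (- 3 * t ^ 2 / 8)) * w ^ 2 := by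
            have := nphi_poly_bound t
            gcongr
        _ ≤ 2 * (256 * Real.exp (-y ^ 2 / 8)) * w ^ 2 := by gcongr; linarith
        _ ≤ 2 * (256 * (C * (1 + y ^ 2) ^ (-κ))) * w ^ 2 := by gcongr; exact hCy y
        _ = _ := by ring) 1 (by simp)
  simp only [one_mul, zero_mul, add_zero, Real.sqrt_one, div_one] at this
  convert this using 2

lemma cdf_scale (y s m : ℝ) (hm : 0 < m) (hm1 : m ≤ 1) (hs : m ≤ s) :
    |stdNormalCDF (y * s) - stdNormalCDF y| ≤ |s - 1| / m := by
  have hpos : ∀ r ∈ Set.Icc (0:ℝ) 1, m ≤ 1 + r * (s - 1) := by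
    intro r hr
    nlinarith [hr.1, hr.2, mul_nonneg hr.1 (sub_nonneg.2 hs)]
  have hd : ∀ r : ℝ, HasDerivAt (fun r => y * (1 + r * (s - 1))) (y * (s - 1)) r := fun r => by
    simpa using (((hasDerivAt_id r).mul_const (s - 1)).const_add 1).const_mul y
  have := mvt01 (fun r => stdNormalCDF (y * (1 + r * (s - 1)))) _ (|s - 1| / m)
    (fun r hr => (cdf_hasDeriv _).comp r (hd r))
    (fun r hr => by
      have h1 := hpos r hr
      have h2 := nphi1_bound (y * (1 + r * (s - 1)))
      have e1 : |nphi (y * (1 + r * (s - 1))) * (y * (s - 1))| * (1 + r * (s - 1))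
         = |-(y * (1 + r * (s - 1))) * nphi (y * (1 + r * (s - 1)))| * |s - 1| := by
        conv_lhs => rw [← abs_of_pos (hm.trans_le h1), ← abs_mul]
        rw [← abs_mul, ← abs_neg]; congr 1
        rw [abs_of_pos (hm.trans_le h1)]; ring
      rw [le_div_iff₀ hm]
      nlinarith [abs_nonneg (nphi (y * (1 + r * (s - 1))) * (y * (s - 1))), abs_nonneg (s-1)]) 1 (by simp)
  simpa using this

/-- jump threshold -/
noncomputable def jthr (ε β τ : ℝ) : ℝ := ε ^ (1 + 2 * β) * τ ^ (-β)

lemma jthr_pos {ε β τ : ℝ} (hε : 0 < ε) (hτ : 0 < τ) : 0 < jthr ε β τ := by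
  unfold jthr; positivity

lemma jthr_sq_le {ε β τ : ℝ} (hε : 0 < ε) (hβ : 0 < β) (hτ : ε ^ 2 ≤ τ) :
    (jthr ε β τ) ^ 2 ≤ τ := by
  have hτ0 : 0 < τ := lt_of_lt_of_le (by positivity) hτ
  have h1 : jthr ε β τ ≤ ε := by
    unfold jthr
    have h2 : τ ^ (-β) ≤ (ε ^ 2) ^ (-β) :=
      Real.rpow_le_rpow_of_nonpos (by positivity) hτ (by linarith)
    have h3 : (ε ^ 2) ^ (-β) = ε ^ (-(2 * β)) := by
      rw [← Real.rpow_natCast ε 2, ← Real.rpow_mul hε.le]; congr 1; push_cast; ring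
    calc ε ^ (1 + 2 * β) * τ ^ (-β) ≤ ε ^ (1 + 2 * β) * ε ^ (-(2 * β)) := by
          rw [← h3]; gcongr
      _ = ε := by rw [← Real.rpow_add hε]; simp
  have := jthr_pos (β := β) hε hτ0
  calc (jthr ε β τ) ^ 2 ≤ ε ^ 2 := by gcongr
    _ ≤ τ := hτ

lemma jthr_big {ε p τ x : ℝ} (hp : 1 < p) (hε : 0 < ε) (hτ : 0 < τ)
    (hx : jthr ε (1 / (2 * p - 2)) τ ≤ |x|) : x ^ 2 / τ ≤ ε ^ (-(2 * p)) * |x| ^ (2 * p) := by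
  have ha := jthr_pos (β := 1 / (2 * p - 2)) hε hτ
  have hx0 : 0 < |x| := ha.trans_le hx
  have h1 : jthr ε (1 / (2 * p - 2)) τ ^ (2 * p - 2) = ε ^ (2 * p) / τ := by
    unfold jthr
    have hp2 : 2 * p - 2 ≠ 0 := by linarith
    have hp3 : p - 1 ≠ 0 := by linarith
    rw [Real.mul_rpow (by positivity) (by positivity), ← Real.rpow_mul hε.le,
      ← Real.rpow_mul hτ.le]
    have e1 : (1 + 2 * (1 / (2 * p - 2))) * (2 * p - 2) = 2 * p := by field_simp; ring
    have e2 : -(1 / (2 * p - 2)) * (2 * p - 2) = -1 := by field_simp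
    rw [e1, e2, Real.rpow_neg_one]; rfl
  have h2 : ε ^ (2 * p) / τ ≤ |x| ^ (2 * p - 2) := by
    rw [← h1]; exact Real.rpow_le_rpow ha.le hx (by linarith)
  have h3 : |x| ^ (2 * p) = |x| ^ (2 * p - 2) * x ^ 2 := by
    rw [← sq_abs x, ← Real.rpow_natCast |x| 2, ← Real.rpow_add hx0]; congr 1; push_cast; ring
  rw [h3, Real.rpow_neg hε.le]
  have hεp : 0 < ε ^ (2 * p) := by positivity
  rw [div_le_iff₀ hτ] at h2
  rw [div_le_iff₀ hτ, inv_mul_eq_div, div_mul_eq_mul_div, le_div_iff₀ hεp]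
  nlinarith [sq_nonneg x]

/-- the kernel -/
noncomputable def kern (ε β τ d : ℝ) : ℝ := ε ^ (1 + 2 * β) * (τ + d ^ 2) ^ (-(3 / 2 + β))

lemma kern_eq {ε β τ d : ℝ} (hτ : 0 < τ) :
    jthr ε β τ / (Real.sqrt τ) ^ 3 * (1 + (d / Real.sqrt τ) ^ 2) ^ (-(3 / 2 + β)) = kern ε β τ d := by
  unfold jthr kern
  have h1 : τ + d ^ 2 = τ * (1 + (d / Real.sqrt τ) ^ 2) := by
    rw [div_pow, Real.sq_sqrt hτ.le]; field_simp
  rw [h1, Real.mul_rpow hτ.le (by positivity)]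
  have h2 : (Real.sqrt τ) ^ 3 = τ ^ (3 / 2 : ℝ) := by
    rw [Real.sqrt_eq_rpow, ← Real.rpow_natCast, ← Real.rpow_mul hτ.le]; norm_num
  have h3 : τ ^ (-β) / τ ^ (3 / 2 : ℝ) = τ ^ (-(3 / 2 + β)) := by
    rw [← Real.rpow_sub hτ]; congr 1; ring
  rw [← h3, h2]; ring

lemma kern_nonneg {ε β τ d : ℝ} (hε : 0 < ε) (hτ : 0 < τ) : 0 ≤ kern ε β τ d := by
  unfold kern; positivity

lemma kern_le {ε β τ d : ℝ} (hε : 0 < ε) (hβ : 0 < β) (hτ : ε ^ 2 ≤ τ) :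
    kern ε β τ d ≤ 1 / τ := by
  have hτ0 : 0 < τ := lt_of_lt_of_le (by positivity) hτ
  rw [← kern_eq hτ0]
  have ha := jthr_pos (β := β) hε hτ0
  have hs := Real.sqrt_pos.2 hτ0
  have h1 : jthr ε β τ ≤ Real.sqrt τ := by
    apply Real.le_sqrt_of_sq_le (jthr_sq_le hε hβ hτ)
  have h2 : (1 + (d / Real.sqrt τ) ^ 2) ^ (-(3 / 2 + β)) ≤ 1 := by
    apply Real.rpow_le_one_of_one_le_of_nonpos
    · nlinarith [sq_nonneg (d / Real.sqrt τ)]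
    · linarith
  calc _ ≤ Real.sqrt τ / Real.sqrt τ ^ 3 * 1 := by gcongr
    _ = 1 / τ := by
      have := Real.sq_sqrt hτ0.le
      rw [mul_one, show Real.sqrt τ ^ 3 = Real.sqrt τ * Real.sqrt τ ^ 2 by ring, this]
      field_simp

lemma path_R (p : ℝ) (hp : 1 < p) : ∃ C : ℝ, 0 < C ∧ ∀ ε τ d x : ℝ, 0 < ε → ε ^ 2 ≤ τ →
    |stdNormalCDF ((d - x) / Real.sqrt τ) - stdNormalCDF (d / Real.sqrt τ)
      - nphi (d / Real.sqrt τ) * (-x / Real.sqrt τ)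
      - 1 / 2 * (-(d / Real.sqrt τ) * nphi (d / Real.sqrt τ)) * (x ^ 2 / τ)|
    ≤ C * (ε ^ (-(2 * p)) * |x| ^ (2 * p) +
      if |x| ≤ jthr ε (1 / (2 * p - 2)) τ then kern ε (1 / (2 * p - 2)) τ d * x ^ 2 else 0) := by
  set β := 1 / (2 * p - 2) with hβ
  have hβ0 : 0 < β := by rw [hβ]; apply one_div_pos.2; linarith
  obtain ⟨C, hC, h2⟩ := taylor_T2 (3 / 2 + β) (by linarith)
  refine ⟨C + 2, by linarith, fun ε τ d x hε hτ => ?_⟩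
  have hτ0 : 0 < τ := lt_of_lt_of_le (by positivity) hτ
  have hs := Real.sqrt_pos.2 hτ0
  have ha := jthr_pos (β := β) hε hτ0
  have hk := kern_nonneg (β := β) (d := d) hε hτ0
  have e1 : (d - x) / Real.sqrt τ = d / Real.sqrt τ + (-x / Real.sqrt τ) := by ring
  have e2 : x ^ 2 / τ = (-x / Real.sqrt τ) ^ 2 := by
    rw [div_pow, Real.sq_sqrt hτ0.le]; ring
  have hnn : 0 ≤ ε ^ (-(2 * p)) * |x| ^ (2 * p) := by positivity
  split_ifs with hx
  · have h1 : jthr ε β τ ≤ Real.sqrt τ := by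
      apply Real.le_sqrt_of_sq_le (jthr_sq_le hε hβ0 hτ)
    rw [e1, e2]
    refine (h2 _ (-x / Real.sqrt τ) ?_).trans ?_
    · rw [abs_div, abs_neg, abs_of_pos hs, div_le_one hs]; linarith
    · have e3 : |(-x / Real.sqrt τ)| ^ 3 ≤ jthr ε β τ / (Real.sqrt τ) ^ 3 * x ^ 2 := by
        rw [abs_div, abs_neg, abs_of_pos hs, div_pow, ← sq_abs x, div_mul_eq_mul_div]
        gcongr
        nlinarith [sq_nonneg |x|]
      calc C * |(-x / Real.sqrt τ)| ^ 3 * (1 + (d / Real.sqrt τ) ^ 2) ^ (-(3 / 2 + β))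
          ≤ C * (jthr ε β τ / (Real.sqrt τ) ^ 3 * x ^ 2) * (1 + (d / Real.sqrt τ) ^ 2) ^ (-(3 / 2 + β)) := by
            gcongr
        _ = C * (kern ε β τ d * x ^ 2) := by rw [← kern_eq hτ0]; ring
        _ ≤ _ := by
          have : 0 ≤ kern ε β τ d * x ^ 2 := by positivity
          nlinarith
  · push Not at hx
    have h3 := jthr_big hp hε hτ0 hx.le
    have h4 := taylor_T1 (d / Real.sqrt τ) (-x / Real.sqrt τ)
    rw [← e1, ← e2] at h4
    refine h4.trans ?_
    nlinarith

lemma path_Q (β : ℝ) (hβ : 0 < β) : ∃ C : ℝ, 0 < C ∧ ∀ ε τ d v : ℝ, 0 < ε → ε ^ 2 ≤ τ → 0 ≤ v →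
    |stdNormalCDF (d / Real.sqrt (τ + v)) - stdNormalCDF (d / Real.sqrt τ)
      - 1 / 2 * (-(d / Real.sqrt τ) * nphi (d / Real.sqrt τ)) * (v / τ)|
    ≤ C * (if v ≤ 2 * jthr ε β τ ^ 2 then kern ε β τ d * v else v / τ) := by
  obtain ⟨C, hC, h3⟩ := taylor_T3 (3 / 2 + β) (by linarith)
  refine ⟨2 * C + 2, by linarith, fun ε τ d v hε hτ hv => ?_⟩
  have hτ0 : 0 < τ := lt_of_lt_of_le (by positivity) hτ
  have hs := Real.sqrt_pos.2 hτ0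
  have ha := jthr_pos (β := β) hε hτ0
  have hk := kern_nonneg (β := β) (d := d) hε hτ0
  have ha2 := jthr_sq_le hε hβ hτ
  have e1 : d / Real.sqrt (τ + v) = d / Real.sqrt τ / Real.sqrt (1 + v / τ) := by
    rw [div_div, ← Real.sqrt_mul hτ0.le]; congr 2; field_simp
  rw [e1]
  have hw : 0 ≤ v / τ := by positivity
  split_ifs with hx
  · refine (h3 _ (v / τ) hw ?_).trans ?_
    · rw [div_le_iff₀ hτ0]; linarith
    · have h1 : jthr ε β τ ≤ Real.sqrt τ := Real.le_sqrt_of_sq_le ha2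
      have e3 : (v / τ) ^ 2 ≤ 2 * (jthr ε β τ / (Real.sqrt τ) ^ 3 * v) := by
        have hτ2 : τ ^ 2 = Real.sqrt τ ^ 3 * Real.sqrt τ := by
          have := Real.sq_sqrt hτ0.le
          calc τ ^ 2 = (Real.sqrt τ ^ 2) ^ 2 := by rw [this]
            _ = _ := by ring
        rw [div_pow, hτ2]
        rw [div_mul_eq_mul_div, ← mul_div_assoc, div_le_div_iff₀ (by positivity) (by positivity)]
        have : v ^ 2 ≤ 2 * jthr ε β τ * v * Real.sqrt τ := by
          calc v ^ 2 = v * v := by ring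
            _ ≤ (2 * jthr ε β τ ^ 2) * v := by gcongr
            _ = 2 * jthr ε β τ * v * jthr ε β τ := by ring
            _ ≤ _ := by gcongr
        calc v ^ 2 * Real.sqrt τ ^ 3 ≤ (2 * jthr ε β τ * v * Real.sqrt τ) * Real.sqrt τ ^ 3 := by gcongr
          _ = _ := by ring
      calc C * (v / τ) ^ 2 * (1 + (d / Real.sqrt τ) ^ 2) ^ (-(3 / 2 + β))
          ≤ C * (2 * (jthr ε β τ / (Real.sqrt τ) ^ 3 * v)) * (1 + (d / Real.sqrt τ) ^ 2) ^ (-(3 / 2 + β)) := by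
            gcongr
        _ = 2 * C * (kern ε β τ d * v) := by rw [← kern_eq hτ0]; ring
        _ ≤ _ := by
          have : 0 ≤ kern ε β τ d * v := by positivity
          nlinarith
  · refine (taylor_T4 _ (v / τ) hw).trans ?_
    nlinarith

lemma integrable_bdd_mul {Ω : Type*} {mΩ : MeasurableSpace Ω} {μ : Measure Ω} {Z f : Ω → ℝ} {C : ℝ}
    (hZ : Measurable Z) (hC : ∀ ω, |Z ω| ≤ C) (hf : Integrable f μ) :
    Integrable (fun ω => Z ω * f ω) μ :=
  hf.bdd_mul (c := C) hZ.aestronglyMeasurable (ae_of_all _ hC)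

lemma one_step (p : ℝ) (hp : 1 < p) : ∃ C : ℝ, 0 < C ∧
    ∀ {Ω : Type} {m mΩ : MeasurableSpace Ω} (μ : Measure Ω) [IsProbabilityMeasure μ] (hm : m ≤ mΩ)
      (ε z : ℝ) (S τ v Y : Ω → ℝ), 0 < ε → (∀ ω, ε ^ 2 ≤ τ ω) → (∀ ω, 0 ≤ v ω) →
      Measurable[m] S → Measurable[m] τ → Measurable[m] v → Measurable Y →
      Integrable v μ → Integrable Y μ → Integrable (fun ω => Y ω ^ 2) μ →
      Integrable (fun ω => |Y ω| ^ (2 * p)) μ →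
      (∀ (Z : Ω → ℝ) (c : ℝ), Measurable[m] Z → (∀ ω, |Z ω| ≤ c) → ∫ ω, Z ω * Y ω ∂μ = 0) →
      (∀ (Z : Ω → ℝ) (c : ℝ), Measurable[m] Z → (∀ ω, |Z ω| ≤ c) →
        ∫ ω, Z ω * Y ω ^ 2 ∂μ = ∫ ω, Z ω * v ω ∂μ) →
      |∫ ω, stdNormalCDF ((z - S ω - Y ω) / Real.sqrt (τ ω)) ∂μ
        - ∫ ω, stdNormalCDF ((z - S ω) / Real.sqrt (τ ω + v ω)) ∂μ|
      ≤ C * (ε ^ (-(2 * p)) * ∫ ω, |Y ω| ^ (2 * p) ∂μ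
        + ∫ ω, (if v ω ≤ 2 * τ ω then kern ε (1 / (2 * p - 2)) (τ ω) (z - S ω) * v ω else 0) ∂μ) := by
  set β := 1 / (2 * p - 2) with hβ
  have hβ0 : 0 < β := by rw [hβ]; apply one_div_pos.2; linarith
  obtain ⟨C1, hC1, hR⟩ := path_R p hp
  obtain ⟨C2, hC2, hQ⟩ := path_Q β hβ0
  rw [← hβ] at hR
  refine ⟨6 * (C1 + C2), by positivity, ?_⟩
  intro Ω m mΩ μ _ hm ε z S τ v Y hε hτ hv hSm hτm hvm hYm hvi hYi hY2i hYpi horth hvar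
  have hτ0 : ∀ ω, 0 < τ ω := fun ω => lt_of_lt_of_le (by positivity) (hτ ω)
  have hsε : ∀ ω, ε ≤ Real.sqrt (τ ω) := fun ω => Real.le_sqrt_of_sq_le (hτ ω)
  have hs0 : ∀ ω, 0 < Real.sqrt (τ ω) := fun ω => Real.sqrt_pos.2 (hτ0 ω)
  have hSM := hSm.mono hm le_rfl
  have hτM := hτm.mono hm le_rfl
  have hvM := hvm.mono hm le_rfl
  have hnm : Measurable nphi := nphi_continuous.measurable
  -- the four multipliers
  let y : Ω → ℝ := fun ω => (z - S ω) / Real.sqrt (τ ω)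
  have hym : Measurable[m] y := (hSm.const_sub z).div hτm.sqrt
  let Z1 : Ω → ℝ := fun ω => - nphi (y ω) / Real.sqrt (τ ω)
  have hZ1m : Measurable[m] Z1 := ((hnm.comp hym).neg).div hτm.sqrt
  have hZ1b : ∀ ω, |Z1 ω| ≤ 1 / ε := by
    intro ω
    simp only [Z1]
    rw [abs_div, abs_neg, abs_of_nonneg (nphi_nonneg _), abs_of_pos (hs0 ω)]
    exact div_le_div₀ zero_le_one (nphi_le_one _) hε (hsε ω)
  let Z2 : Ω → ℝ := fun ω => 1 / 2 * (-(y ω) * nphi (y ω)) / τ ω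
  have hZ2m : Measurable[m] Z2 := ((hym.neg.mul (hnm.comp hym)).const_mul _).div hτm
  have hZ2b : ∀ ω, |Z2 ω| ≤ 1 / ε ^ 2 := by
    intro ω
    simp only [Z2]
    rw [abs_div, abs_of_pos (hτ0 ω)]
    refine div_le_div₀ zero_le_one ?_ (by positivity) (hτ ω)
    rw [abs_mul, abs_of_pos (by norm_num : (0:ℝ) < 1 / 2)]
    linarith [nphi1_bound (y ω)]
  let a : Ω → ℝ := fun ω => jthr ε β (τ ω)
  have ham : Measurable[m] a := (hτm.pow_const (-β)).const_mul (ε ^ (1 + 2 * β))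
  have ha0 : ∀ ω, 0 < a ω := fun ω => jthr_pos hε (hτ0 ω)
  have haτ : ∀ ω, a ω ^ 2 ≤ τ ω := fun ω => jthr_sq_le hε hβ0 (hτ ω)
  let K : Ω → ℝ := fun ω => kern ε β (τ ω) (z - S ω)
  have hKm : Measurable[m] K :=
    ((hτm.add ((hSm.const_sub z).pow_const 2)).pow_const (-(3 / 2 + β))).const_mul (ε ^ (1 + 2 * β))
  have hK0 : ∀ ω, 0 ≤ K ω := fun ω => kern_nonneg hε (hτ0 ω)
  have hKle : ∀ ω, K ω ≤ 1 / τ ω := fun ω => kern_le hε hβ0 (hτ ω)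
  have hinv : ∀ ω, 1 / τ ω ≤ 1 / ε ^ 2 := fun ω => one_div_le_one_div_of_le (by positivity) (hτ ω)
  have hGm : MeasurableSet[m] {ω | v ω ≤ 2 * a ω ^ 2} :=
    measurableSet_le hvm ((ham.pow_const 2).const_mul 2)
  let Z3 : Ω → ℝ := fun ω => if v ω ≤ 2 * a ω ^ 2 then K ω else 0
  have hZ3m : Measurable[m] Z3 := Measurable.ite hGm hKm measurable_const
  have hZ3b : ∀ ω, |Z3 ω| ≤ 1 / ε ^ 2 := by
    intro ω
    simp only [Z3]
    split_ifs
    · rw [abs_of_nonneg (hK0 ω)]; exact (hKle ω).trans (hinv ω)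
    · simp; positivity
  let Z4 : Ω → ℝ := fun ω => if v ω ≤ 2 * a ω ^ 2 then 0 else 1 / τ ω
  have hZ4m : Measurable[m] Z4 := Measurable.ite hGm measurable_const (hτm.const_div 1)
  have hZ4b : ∀ ω, |Z4 ω| ≤ 1 / ε ^ 2 := by
    intro ω
    simp only [Z4]
    split_ifs
    · simp; positivity
    · rw [abs_of_nonneg (one_div_nonneg.2 (hτ0 ω).le)]; exact hinv ω
  let Z5 : Ω → ℝ := fun ω => Z4 ω * a ω ^ 2
  have hZ5m : Measurable[m] Z5 := hZ4m.mul (ham.pow_const 2)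
  have hZ5b : ∀ ω, |Z5 ω| ≤ 1 := by
    intro ω
    simp only [Z5, Z4]
    split_ifs
    · simp
    · rw [abs_of_nonneg (mul_nonneg (one_div_nonneg.2 (hτ0 ω).le) (sq_nonneg _)),
        one_div_mul_eq_div, div_le_one (hτ0 ω)]
      exact haτ ω
  -- integrability
  have i1 := integrable_bdd_mul (hZ1m.mono hm le_rfl) hZ1b hYi
  have i2Y := integrable_bdd_mul (hZ2m.mono hm le_rfl) hZ2b hY2i
  have i2v := integrable_bdd_mul (hZ2m.mono hm le_rfl) hZ2b hvi
  have i3Y := integrable_bdd_mul (hZ3m.mono hm le_rfl) hZ3b hY2i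
  have i3v := integrable_bdd_mul (hZ3m.mono hm le_rfl) hZ3b hvi
  have i4Y := integrable_bdd_mul (hZ4m.mono hm le_rfl) hZ4b hY2i
  have i4v := integrable_bdd_mul (hZ4m.mono hm le_rfl) hZ4b hvi
  have i5 : Integrable Z5 μ := by
    have := integrable_bdd_mul (hZ5m.mono hm le_rfl) hZ5b (integrable_const (1:ℝ) (μ := μ))
    simpa using this
  have iF : Integrable (fun ω => stdNormalCDF ((z - S ω - Y ω) / Real.sqrt (τ ω))) μ := by
    have hmm : Measurable (fun ω => stdNormalCDF ((z - S ω - Y ω) / Real.sqrt (τ ω))) :=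
      cdf_measurable.comp (((hSM.const_sub z).sub hYm).div hτM.sqrt)
    have := integrable_bdd_mul (C := 1) hmm
      (fun ω => by rw [abs_of_nonneg (cdf_nonneg _)]; exact cdf_le_one _)
      (integrable_const (1:ℝ) (μ := μ))
    simpa using this
  have iG : Integrable (fun ω => stdNormalCDF ((z - S ω) / Real.sqrt (τ ω + v ω))) μ := by
    have hmm : Measurable (fun ω => stdNormalCDF ((z - S ω) / Real.sqrt (τ ω + v ω))) :=
      cdf_measurable.comp ((hSM.const_sub z).div (hτM.add hvM).sqrt)
    have := integrable_bdd_mul (C := 1) hmm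
      (fun ω => by rw [abs_of_nonneg (cdf_nonneg _)]; exact cdf_le_one _)
      (integrable_const (1:ℝ) (μ := μ))
    simpa using this
  have iP := hYpi.const_mul (ε ^ (-(2 * p)))
  -- expectation identity
  have hE : ∫ ω, stdNormalCDF ((z - S ω - Y ω) / Real.sqrt (τ ω)) ∂μ
        - ∫ ω, stdNormalCDF ((z - S ω) / Real.sqrt (τ ω + v ω)) ∂μ
      = ∫ ω, (stdNormalCDF ((z - S ω - Y ω) / Real.sqrt (τ ω))
          - stdNormalCDF ((z - S ω) / Real.sqrt (τ ω + v ω))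
          - (Z1 ω * Y ω + (Z2 ω * Y ω ^ 2 - Z2 ω * v ω))) ∂μ := by
    have iFG : Integrable (fun ω => stdNormalCDF ((z - S ω - Y ω) / Real.sqrt (τ ω))
          - stdNormalCDF ((z - S ω) / Real.sqrt (τ ω + v ω))) μ := iF.sub iG
    have i2d : Integrable (fun ω => Z2 ω * Y ω ^ 2 - Z2 ω * v ω) μ := i2Y.sub i2v
    have i12 : Integrable (fun ω => Z1 ω * Y ω + (Z2 ω * Y ω ^ 2 - Z2 ω * v ω)) μ := i1.add i2d
    rw [integral_sub iFG i12, integral_sub iF iG,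
      integral_add i1 i2d, integral_sub i2Y i2v, horth Z1 _ hZ1m hZ1b,
      hvar Z2 _ hZ2m hZ2b]
    simp
  rw [hE]
  have hpt : ∀ ω, |stdNormalCDF ((z - S ω - Y ω) / Real.sqrt (τ ω))
          - stdNormalCDF ((z - S ω) / Real.sqrt (τ ω + v ω))
          - (Z1 ω * Y ω + (Z2 ω * Y ω ^ 2 - Z2 ω * v ω))|
      ≤ (C1 + C2) * (ε ^ (-(2 * p)) * |Y ω| ^ (2 * p) + (Z3 ω * Y ω ^ 2 + Z3 ω * v ω)
        + 4 * (Z4 ω * v ω - Z5 ω)) := by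
    intro ω
    have r := hR ε (τ ω) (z - S ω) (Y ω) hε (hτ ω)
    have q := hQ ε (τ ω) (z - S ω) (v ω) hε (hτ ω) (hv ω)
    have e : stdNormalCDF ((z - S ω - Y ω) / Real.sqrt (τ ω))
          - stdNormalCDF ((z - S ω) / Real.sqrt (τ ω + v ω))
          - (Z1 ω * Y ω + (Z2 ω * Y ω ^ 2 - Z2 ω * v ω))
        = (stdNormalCDF ((z - S ω - Y ω) / Real.sqrt (τ ω)) - stdNormalCDF ((z - S ω) / Real.sqrt (τ ω))
      - nphi ((z - S ω) / Real.sqrt (τ ω)) * (-Y ω / Real.sqrt (τ ω))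
      - 1 / 2 * (-((z - S ω) / Real.sqrt (τ ω)) * nphi ((z - S ω) / Real.sqrt (τ ω))) * (Y ω ^ 2 / τ ω))
       - (stdNormalCDF ((z - S ω) / Real.sqrt (τ ω + v ω)) - stdNormalCDF ((z - S ω) / Real.sqrt (τ ω))
      - 1 / 2 * (-((z - S ω) / Real.sqrt (τ ω)) * nphi ((z - S ω) / Real.sqrt (τ ω))) * (v ω / τ ω)) := by
      simp only [Z1, Z2, y]; ring
    rw [e]
    refine (abs_sub _ _).trans ((add_le_add r q).trans ?_)
    have hP : 0 ≤ ε ^ (-(2 * p)) * |Y ω| ^ (2 * p) := by positivity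
    have hKv : 0 ≤ K ω * v ω := mul_nonneg (hK0 ω) (hv ω)
    have hKY : 0 ≤ K ω * Y ω ^ 2 := mul_nonneg (hK0 ω) (sq_nonneg _)
    by_cases hg : v ω ≤ 2 * a ω ^ 2
    · have hg' : v ω ≤ 2 * jthr ε β (τ ω) ^ 2 := hg
      simp only [Z3, Z4, Z5, if_pos hg, if_pos hg']
      have : (if |Y ω| ≤ jthr ε β (τ ω) then kern ε β (τ ω) (z - S ω) * Y ω ^ 2 else 0) ≤ K ω * Y ω ^ 2 := by
        split_ifs
        · exact le_rfl
        · exact hKY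
      change _ + C2 * (K ω * v ω) ≤ _
      have m1 := mul_le_mul_of_nonneg_left this hC1.le
      nlinarith [mul_nonneg hC2.le hP, mul_nonneg hC2.le hKY, mul_nonneg hC1.le hKv]
    · have hg' : ¬ v ω ≤ 2 * jthr ε β (τ ω) ^ 2 := hg
      simp only [Z3, Z4, Z5, if_neg hg, if_neg hg']
      push Not at hg
      have hva : v ω / τ ω ≤ 2 * (1 / τ ω * v ω - 1 / τ ω * a ω ^ 2) := by
        rw [← mul_sub, ← mul_assoc, mul_one_div, div_mul_eq_mul_div]
        gcongr
        · exact (hτ0 ω).le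
        · linarith
      have hva0 : 0 ≤ v ω / τ ω := div_nonneg (hv ω) (hτ0 ω).le
      have : (if |Y ω| ≤ jthr ε β (τ ω) then kern ε β (τ ω) (z - S ω) * Y ω ^ 2 else 0) ≤ v ω / τ ω := by
        split_ifs with h
        · have h1 : Y ω ^ 2 ≤ v ω := by
            have : Y ω ^ 2 ≤ a ω ^ 2 := by
              rw [← sq_abs (Y ω)]
              exact pow_le_pow_left₀ (abs_nonneg _) h 2
            nlinarith [sq_nonneg (a ω)]
          calc K ω * Y ω ^ 2 ≤ 1 / τ ω * v ω := by
                have := hKle ω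
                have := hK0 ω
                have := (one_div_pos.2 (hτ0 ω)).le
                gcongr
            _ = _ := by ring
        · exact hva0
      have m1 := mul_le_mul_of_nonneg_left this hC1.le
      have m2 := mul_le_mul_of_nonneg_left hva hC1.le
      have m3 := mul_le_mul_of_nonneg_left hva hC2.le
      nlinarith [mul_nonneg hC2.le hP, mul_nonneg hC1.le hva0, mul_nonneg hC2.le hva0]
  have iB : Integrable (fun ω => (C1 + C2) * (ε ^ (-(2 * p)) * |Y ω| ^ (2 * p)
      + (Z3 ω * Y ω ^ 2 + Z3 ω * v ω) + 4 * (Z4 ω * v ω - Z5 ω))) μ :=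
    ((iP.add (i3Y.add i3v)).add ((i4v.sub i5).const_mul 4)).const_mul _
  have hle : ‖∫ ω, (stdNormalCDF ((z - S ω - Y ω) / Real.sqrt (τ ω))
          - stdNormalCDF ((z - S ω) / Real.sqrt (τ ω + v ω))
          - (Z1 ω * Y ω + (Z2 ω * Y ω ^ 2 - Z2 ω * v ω))) ∂μ‖ ≤ _ :=
    norm_integral_le_of_norm_le iB (ae_of_all _ hpt)
  rw [Real.norm_eq_abs] at hle
  refine hle.trans ?_
  have i3s : Integrable (fun ω => Z3 ω * Y ω ^ 2 + Z3 ω * v ω) μ := i3Y.add i3v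
  have iP3 : Integrable (fun ω => ε ^ (-(2 * p)) * |Y ω| ^ (2 * p)
      + (Z3 ω * Y ω ^ 2 + Z3 ω * v ω)) μ := iP.add i3s
  have i45 : Integrable (fun ω => Z4 ω * v ω - Z5 ω) μ := i4v.sub i5
  have i45' : Integrable (fun ω => 4 * (Z4 ω * v ω - Z5 ω)) μ := i45.const_mul 4
  rw [integral_const_mul, integral_add iP3 i45',
    integral_add iP i3s, integral_add i3Y i3v, integral_const_mul, integral_const_mul,
    hvar Z3 _ hZ3m hZ3b, integral_sub i4v i5, ← hvar Z4 _ hZ4m hZ4b, ← integral_sub i4Y i5]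
  have hb1 : ∫ ω, (Z4 ω * Y ω ^ 2 - Z5 ω) ∂μ ≤ ε ^ (-(2 * p)) * ∫ ω, |Y ω| ^ (2 * p) ∂μ := by
    rw [← integral_const_mul]
    refine integral_mono (i4Y.sub i5) iP fun ω => ?_
    have hP : 0 ≤ ε ^ (-(2 * p)) * |Y ω| ^ (2 * p) := by positivity
    simp only [Z5]
    rw [← mul_sub]
    by_cases hg : v ω ≤ 2 * a ω ^ 2
    · simp only [Z4, if_pos hg]; simpa using hP
    · simp only [Z4, if_neg hg]
      have hτi := one_div_pos.2 (hτ0 ω)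
      by_cases hY : a ω ≤ |Y ω|
      · refine le_trans ?_ (jthr_big hp hε (hτ0 ω) hY)
        rw [div_eq_mul_one_div (Y ω ^ 2), mul_comm (Y ω ^ 2) (1 / τ ω)]
        exact mul_le_mul_of_nonneg_left (by nlinarith [sq_nonneg (a ω)]) hτi.le
      · push Not at hY
        refine le_trans ?_ hP
        have : Y ω ^ 2 ≤ a ω ^ 2 := by
          rw [← sq_abs (Y ω)]
          exact pow_le_pow_left₀ (abs_nonneg _) hY.le 2
        nlinarith
  have hb2 : ∫ ω, Z3 ω * v ω ∂μ ≤ ∫ ω, (if v ω ≤ 2 * τ ω then kern ε β (τ ω) (z - S ω) * v ω else 0) ∂μ := by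
    refine integral_mono i3v ?_ fun ω => ?_
    · have hGm2 : MeasurableSet {ω | v ω ≤ 2 * τ ω} := measurableSet_le hvM (hτM.const_mul 2)
      have := integrable_bdd_mul (Z := fun ω => if v ω ≤ 2 * τ ω then K ω else 0) (C := 1 / ε ^ 2)
        (Measurable.ite hGm2 (hKm.mono hm le_rfl) measurable_const) (fun ω => by
          split_ifs
          · rw [abs_of_nonneg (hK0 ω)]; exact (hKle ω).trans (hinv ω)
          · simp; positivity) hvi
      simpa only [ite_mul, zero_mul] using this
    · have hKv : 0 ≤ K ω * v ω := mul_nonneg (hK0 ω) (hv ω)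
      by_cases hg : v ω ≤ 2 * a ω ^ 2
      · have : v ω ≤ 2 * τ ω := by linarith [haτ ω]
        simp only [Z3, if_pos hg, if_pos this]; exact le_rfl
      · simp only [Z3, if_neg hg, zero_mul]
        split_ifs
        · exact hKv
        · exact le_rfl
  have hPP : 0 ≤ ε ^ (-(2 * p)) * ∫ ω, |Y ω| ^ (2 * p) ∂μ := by
    apply mul_nonneg (by positivity); exact integral_nonneg fun ω => by positivity
  have hVV : 0 ≤ ∫ ω, Z3 ω * v ω ∂μ := by
    refine integral_nonneg fun ω => mul_nonneg ?_ (hv ω)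
    simp only [Z3]
    split_ifs
    · exact hK0 ω
    · exact le_rfl
  rw [mul_comm 6, mul_assoc]
  refine mul_le_mul_of_nonneg_left ?_ (by positivity)
  linarith

set_option linter.unusedSectionVars false
/-- Martingale differences `Y i` with conditional variances `v i`. -/
structure MDS {Ω : Type} {mΩ : MeasurableSpace Ω} (μ : Measure Ω) (ℱ : Filtration ℕ mΩ)
    (Y v : ℕ → Ω → ℝ) : Prop where
  Ym : ∀ i, Measurable[ℱ (i + 1)] (Y i)
  vm : ∀ i, Measurable[ℱ i] (v i)
  v0 : ∀ i ω, 0 ≤ v i ω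
  Yi : ∀ i, Integrable (Y i) μ
  Y2i : ∀ i, Integrable (fun ω => Y i ω ^ 2) μ
  vi : ∀ i, Integrable (v i) μ
  orth : ∀ i (Z : Ω → ℝ), Measurable[ℱ i] Z → Integrable (fun ω => Z ω * Y i ω) μ →
    ∫ ω, Z ω * Y i ω ∂μ = 0
  var : ∀ i (Z : Ω → ℝ) (c : ℝ), Measurable[ℱ i] Z → (∀ ω, |Z ω| ≤ c) →
    ∫ ω, Z ω * Y i ω ^ 2 ∂μ = ∫ ω, Z ω * v i ω ∂μ

/-- partial sums -/
def psum {Ω : Type} (Y : ℕ → Ω → ℝ) (k : ℕ) (ω : Ω) : ℝ := ∑ i ∈ range k, Y i ω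

lemma psum_succ {Ω : Type} (Y : ℕ → Ω → ℝ) (k : ℕ) (ω : Ω) :
    psum Y (k + 1) ω = psum Y k ω + Y k ω := by
  simp [psum, sum_range_succ]

lemma psum_zero {Ω : Type} (Y : ℕ → Ω → ℝ) (ω : Ω) : psum Y 0 ω = 0 := by simp [psum]

section
variable {Ω : Type} {mΩ : MeasurableSpace Ω} {μ : Measure Ω} [IsProbabilityMeasure μ]
  {ℱ : Filtration ℕ mΩ} {Y v : ℕ → Ω → ℝ}

lemma MDS.Ymeas (h : MDS μ ℱ Y v) (i : ℕ) : Measurable (Y i) := (h.Ym i).mono (ℱ.le _) le_rfl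
lemma MDS.vmeas (h : MDS μ ℱ Y v) (i : ℕ) : Measurable (v i) := (h.vm i).mono (ℱ.le _) le_rfl

lemma MDS.psumY_m (h : MDS μ ℱ Y v) (k : ℕ) : Measurable[ℱ k] (psum Y k) := by
  unfold psum
  refine Finset.measurable_fun_sum _ fun i hi => ?_
  exact (h.Ym i).mono (ℱ.mono (by simp at hi; omega)) le_rfl

lemma MDS.psumv_m (h : MDS μ ℱ Y v) (k : ℕ) : Measurable[ℱ k] (psum v (k + 1)) := by
  unfold psum
  refine Finset.measurable_fun_sum _ fun i hi => ?_
  exact (h.vm i).mono (ℱ.mono (by simp at hi; omega)) le_rfl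

lemma MDS.psumv_mono (h : MDS μ ℱ Y v) {k l : ℕ} (hkl : k ≤ l) (ω : Ω) :
    psum v k ω ≤ psum v l ω := by
  unfold psum
  exact sum_le_sum_of_subset_of_nonneg (by simpa using hkl) fun i _ _ => h.v0 i ω

lemma MDS.psumv_nonneg (h : MDS μ ℱ Y v) (k : ℕ) (ω : Ω) : 0 ≤ psum v k ω :=
  sum_nonneg fun i _ => h.v0 i ω

lemma MDS.psumv_int (h : MDS μ ℱ Y v) (k : ℕ) : Integrable (psum v k) μ := by
  unfold psum
  exact integrable_finsetSum _ fun i _ => h.vi i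

lemma MDS.YL2 (h : MDS μ ℱ Y v) (i : ℕ) : MemLp (Y i) 2 μ :=
  (memLp_two_iff_integrable_sq (h.Ymeas i).aestronglyMeasurable).2 (h.Y2i i)

lemma MDS.psumL2 (h : MDS μ ℱ Y v) (k : ℕ) : MemLp (psum Y k) 2 μ := by
  unfold psum
  exact memLp_finsetSum _ fun i _ => h.YL2 i

lemma MDS.incr (h : MDS μ ℱ Y v) (i : ℕ) (Z : Ω → ℝ) (c : ℝ) (hZ : Measurable[ℱ i] Z)
    (hc : ∀ ω, |Z ω| ≤ c) (j : ℕ) (hij : i ≤ j) :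
    ∫ ω, Z ω * (psum Y j ω - psum Y i ω) ^ 2 ∂μ = ∫ ω, Z ω * (psum v j ω - psum v i ω) ∂μ := by
  have hZM : Measurable Z := hZ.mono (ℱ.le i) le_rfl
  induction j, hij using Nat.le_induction with
  | base => simp
  | succ j hij ih =>
    have hZj : Measurable[ℱ j] Z := hZ.mono (ℱ.mono hij) le_rfl
    have hDm : Measurable[ℱ j] (fun ω => psum Y j ω - psum Y i ω) :=
      (h.psumY_m j).sub ((h.psumY_m i).mono (ℱ.mono hij) le_rfl)
    have hD : MemLp (fun ω => psum Y j ω - psum Y i ω) 2 μ := (h.psumL2 j).sub (h.psumL2 i)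
    have iDY : Integrable (fun ω => (psum Y j ω - psum Y i ω) * Y j ω) μ :=
      hD.integrable_mul (h.YL2 j)
    have iD2 : Integrable (fun ω => (psum Y j ω - psum Y i ω) ^ 2) μ := hD.integrable_sq
    have i1 : Integrable (fun ω => Z ω * (psum Y j ω - psum Y i ω) ^ 2) μ :=
      integrable_bdd_mul hZM hc iD2
    have i2 : Integrable (fun ω => (2 * Z ω * (psum Y j ω - psum Y i ω)) * Y j ω) μ := by
      have := (integrable_bdd_mul hZM hc iDY).const_mul 2
      refine this.congr (ae_of_all _ fun ω => ?_)
      simp only []; ring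
    have i3 : Integrable (fun ω => Z ω * Y j ω ^ 2) μ := integrable_bdd_mul hZM hc (h.Y2i j)
    have iv : Integrable (fun ω => Z ω * v j ω) μ := integrable_bdd_mul hZM hc (h.vi j)
    have iV : Integrable (fun ω => Z ω * (psum v j ω - psum v i ω)) μ :=
      integrable_bdd_mul hZM hc ((h.psumv_int j).sub (h.psumv_int i))
    have i12 : Integrable (fun ω => Z ω * (psum Y j ω - psum Y i ω) ^ 2
      + (2 * Z ω * (psum Y j ω - psum Y i ω)) * Y j ω) μ := i1.add i2
    calc ∫ ω, Z ω * (psum Y (j + 1) ω - psum Y i ω) ^ 2 ∂μ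
        = ∫ ω, (Z ω * (psum Y j ω - psum Y i ω) ^ 2
          + (2 * Z ω * (psum Y j ω - psum Y i ω)) * Y j ω + Z ω * Y j ω ^ 2) ∂μ := by
          congr 1; ext ω; rw [psum_succ]; ring
      _ = ∫ ω, Z ω * (psum v j ω - psum v i ω) ∂μ + ∫ ω, Z ω * v j ω ∂μ := by
          rw [integral_add i12 i3, integral_add i1 i2, ih,
            h.orth j (fun ω => 2 * Z ω * (psum Y j ω - psum Y i ω)) ((hZj.const_mul 2).mul hDm) i2, h.var j Z c hZj hc, add_zero]
      _ = ∫ ω, (Z ω * (psum v j ω - psum v i ω) + Z ω * v j ω) ∂μ := (integral_add iV iv).symm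
      _ = _ := by congr 1; ext ω; rw [psum_succ]; ring

end

lemma conc {κ : ℝ} (hκ : 0 < κ) {Ω : Type} {m mΩ : MeasurableSpace Ω} (μ : Measure Ω)
    [IsProbabilityMeasure μ] (hm : m ≤ mΩ) (a c z : ℝ) (S T τ v : Ω → ℝ) (ha : 0 < a)
    (haτ : ∀ ω, a ≤ τ ω) (hτc : ∀ ω, τ ω ≤ c) (hv : ∀ ω, 0 ≤ v ω)
    (hSm : Measurable[m] S) (hτm : Measurable[m] τ) (hvm : Measurable[m] v) (hTm : Measurable T)
    (hTi : Integrable (fun ω => (T ω - S ω) ^ 2) μ)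
    (hvi : Integrable v μ)
    (hvar : ∀ (Z : Ω → ℝ) (c : ℝ), Measurable[m] Z → (∀ ω, 0 ≤ Z ω) → (∀ ω, Z ω ≤ c) →
      ∫ ω, Z ω * (T ω - S ω) ^ 2 ∂μ ≤ ∫ ω, Z ω * (τ ω + v ω) ∂μ) :
    ∫ ω, (if v ω ≤ 2 * τ ω then (τ ω + (z - S ω) ^ 2) ^ (-κ) * v ω else 0) ∂μ
    ≤ 2 * 13 ^ κ * ∫ ω, (if v ω ≤ 2 * τ ω then (τ ω + (z - T ω) ^ 2) ^ (-κ) * v ω else 0) ∂μ := by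
  have hτ0 : ∀ ω, 0 < τ ω := fun ω => ha.trans_le (haτ ω)
  have hSM := hSm.mono hm le_rfl
  have hτM := hτm.mono hm le_rfl
  have hvM := hvm.mono hm le_rfl
  have hGm : MeasurableSet[m] {ω | v ω ≤ 2 * τ ω} := measurableSet_le hvm (hτm.const_mul 2)
  have hGM : MeasurableSet {ω | v ω ≤ 2 * τ ω} := measurableSet_le hvM (hτM.const_mul 2)
  set H : Ω → ℝ := fun ω => if v ω ≤ 2 * τ ω then (τ ω + (z - S ω) ^ 2) ^ (-κ) * v ω else 0 with hH
  set G : Ω → ℝ := fun ω => if v ω ≤ 2 * τ ω then (τ ω + (z - T ω) ^ 2) ^ (-κ) * v ω else 0 with hG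
  have hb : ∀ x ω, (if v ω ≤ 2 * τ ω then (τ ω + x ^ 2) ^ (-κ) * v ω else 0) ≤ a ^ (-κ) * (2 * c) := by
    intro x ω
    have hc0 : 0 ≤ c := (hτ0 ω).le.trans (hτc ω)
    split_ifs with h
    · have h1 : (τ ω + x ^ 2) ^ (-κ) ≤ a ^ (-κ) :=
        Real.rpow_le_rpow_of_nonpos ha (by nlinarith [haτ ω, sq_nonneg x]) (by linarith)
      have := hτc ω
      exact mul_le_mul h1 (by linarith) (hv ω) (by positivity)
    · positivity
  have h0 : ∀ x ω, 0 ≤ (if v ω ≤ 2 * τ ω then (τ ω + x ^ 2) ^ (-κ) * v ω else 0) := by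
    intro x ω
    have := hτ0 ω
    have := hv ω
    split_ifs
    · positivity
    · exact le_rfl
  have hHm : Measurable[m] H := Measurable.ite hGm
    (((hτm.add ((hSm.const_sub z).pow_const 2)).pow_const _).mul hvm) measurable_const
  have hGm' : Measurable G := Measurable.ite hGM
    (((hτM.add ((hTm.const_sub z).pow_const 2)).pow_const _).mul hvM) measurable_const
  have iH : Integrable H μ := by
    have := integrable_bdd_mul (hHm.mono hm le_rfl) (C := a ^ (-κ) * (2 * c))
      (fun ω => by rw [abs_of_nonneg (h0 _ ω)]; exact hb _ ω) (integrable_const (1:ℝ) (μ := μ))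
    simpa using this
  have iG : Integrable G μ := by
    have := integrable_bdd_mul hGm' (C := a ^ (-κ) * (2 * c))
      (fun ω => by rw [abs_of_nonneg (h0 _ ω)]; exact hb _ ω) (integrable_const (1:ℝ) (μ := μ))
    simpa using this
  set Z : Ω → ℝ := fun ω => H ω / (6 * τ ω) with hZ
  have hZm : Measurable[m] Z := hHm.div (hτm.const_mul 6)
  have hZ0 : ∀ ω, 0 ≤ Z ω := fun ω => div_nonneg (h0 _ ω) (by linarith [hτ0 ω])
  have hZb : ∀ ω, Z ω ≤ a ^ (-κ) * (2 * c) / (6 * a) := fun ω =>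
    div_le_div₀ ((h0 0 ω).trans (hb 0 ω)) (hb _ ω) (by positivity) (by linarith [haτ ω])
  have hZb' : ∀ ω, |Z ω| ≤ a ^ (-κ) * (2 * c) / (6 * a) := fun ω => by
    rw [abs_of_nonneg (hZ0 ω)]; exact hZb ω
  have iZT : Integrable (fun ω => Z ω * (T ω - S ω) ^ 2) μ :=
    integrable_bdd_mul (hZm.mono hm le_rfl) hZb' hTi
  have hpt : ∀ ω, H ω ≤ Z ω * (T ω - S ω) ^ 2 + 13 ^ κ * G ω := by
    intro ω
    have ht := hτ0 ω
    have hH0 : 0 ≤ H ω := h0 _ ω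
    have hG0 : 0 ≤ G ω := h0 _ ω
    by_cases hc : 6 * τ ω ≤ (T ω - S ω) ^ 2
    · have : H ω ≤ Z ω * (T ω - S ω) ^ 2 := by
        have e : H ω = Z ω * (6 * τ ω) := by simp only [hZ]; field_simp
        calc H ω = Z ω * (6 * τ ω) := e
          _ ≤ _ := mul_le_mul_of_nonneg_left hc (hZ0 ω)
      have : 0 ≤ (13:ℝ) ^ κ * G ω := by positivity
      linarith
    · push Not at hc
      have : H ω ≤ 13 ^ κ * G ω := by
        simp only [hH, hG]
        split_ifs with hs
        · rw [← mul_assoc]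
          refine mul_le_mul_of_nonneg_right ?_ (hv ω)
          have h1 : τ ω + (z - T ω) ^ 2 ≤ 13 * (τ ω + (z - S ω) ^ 2) := by
            nlinarith [sq_nonneg (z - S ω + (T ω - S ω)), sq_nonneg (z - S ω)]
          have h2 : (13 * (τ ω + (z - S ω) ^ 2)) ^ (-κ) ≤ (τ ω + (z - T ω) ^ 2) ^ (-κ) :=
            Real.rpow_le_rpow_of_nonpos (by positivity) h1 (by linarith)
          rw [Real.mul_rpow (by norm_num) (by positivity), Real.rpow_neg (by norm_num)] at h2
          have h13 : (0:ℝ) < 13 ^ κ := by positivity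
          rw [inv_mul_le_iff₀ h13] at h2
          exact h2
        · simp
      have := mul_nonneg (hZ0 ω) (sq_nonneg (T ω - S ω))
      linarith
  have hA : ∫ ω, Z ω * (T ω - S ω) ^ 2 ∂μ ≤ 1 / 2 * ∫ ω, H ω ∂μ := by
    refine (hvar Z _ hZm hZ0 hZb).trans ?_
    rw [← integral_const_mul]
    have iτ : Integrable τ μ := by
      have := integrable_bdd_mul hτM (C := c)
        (fun ω => by rw [abs_of_nonneg (hτ0 ω).le]; exact hτc ω) (integrable_const (1:ℝ) (μ := μ))
      simpa using this
    refine integral_mono (integrable_bdd_mul (hZm.mono hm le_rfl) hZb' (iτ.add hvi))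
      (iH.const_mul _) fun ω => ?_
    have ht := hτ0 ω
    simp only [hZ]
    by_cases hs : v ω ≤ 2 * τ ω
    · have : H ω / (6 * τ ω) * (τ ω + v ω) ≤ H ω / (6 * τ ω) * (3 * τ ω) :=
        mul_le_mul_of_nonneg_left (by linarith) (hZ0 ω)
      refine this.trans (le_of_eq ?_)
      field_simp; ring
    · have : H ω = 0 := by simp only [hH, if_neg hs]
      simp [this]
  have hB : ∫ ω, H ω ∂μ ≤ ∫ ω, Z ω * (T ω - S ω) ^ 2 ∂μ + 13 ^ κ * ∫ ω, G ω ∂μ := by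
    rw [← integral_const_mul, ← integral_add iZT (iG.const_mul _)]
    exact integral_mono iH (iZT.add (iG.const_mul _)) hpt
  linarith

lemma rpow_conv {α s v : ℝ} (hα : 0 < α) (hs : 0 < s) (hv : 0 ≤ v) :
    α * (s + v) ^ (-(α + 1)) * v ≤ s ^ (-α) - (s + v) ^ (-α) := by
  have hsv : 0 < s + v := by linarith
  have h1 : 1 + α * (v / (s + v)) ≤ (s / (s + v)) ^ (-α) := by
    rw [Real.rpow_def_of_pos (by positivity)]
    have h2 := Real.log_le_sub_one_of_pos (show 0 < s / (s + v) by positivity)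
    have h3 := Real.add_one_le_exp (Real.log (s / (s + v)) * -α)
    have h4 : s / (s + v) - 1 = - (v / (s + v)) := by field_simp; ring
    rw [h4] at h2
    nlinarith
  rw [Real.div_rpow hs.le hsv.le, le_div_iff₀ (by positivity)] at h1
  have h5 : (s + v) ^ (-(α + 1)) = (s + v) ^ (-α) / (s + v) := by
    rw [show -(α + 1) = -α - 1 by ring, Real.rpow_sub_one hsv.ne']
  rw [h5]
  have h6 : (1 + α * (v / (s + v))) * (s + v) ^ (-α) = (s + v) ^ (-α) + α * ((s + v) ^ (-α) / (s + v)) * v := by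
    field_simp
  linarith

lemma path_term {κ s t v : ℝ} (hκ : 1 < κ) (hs : 0 < t) (hst : t ≤ s) (hv : 0 ≤ v) (h : v ≤ 2 * t) :
    s ^ (-κ) * v ≤ 3 ^ κ / (κ - 1) * (s ^ (-(κ - 1)) - (s + v) ^ (-(κ - 1))) := by
  have hs' : 0 < s := hs.trans_le hst
  have h1 := rpow_conv (α := κ - 1) (s := s) (v := v) (by linarith) hs' hv
  rw [sub_add_cancel] at h1
  have h2 : (3 * s) ^ (-κ) ≤ (s + v) ^ (-κ) :=
    Real.rpow_le_rpow_of_nonpos (by positivity) (by linarith) (by linarith)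
  rw [Real.mul_rpow (by norm_num) hs'.le, Real.rpow_neg (by norm_num : (0:ℝ) ≤ 3), inv_mul_le_iff₀ (by positivity)] at h2
  have hk : 0 < κ - 1 := by linarith
  rw [div_mul_eq_mul_div, le_div_iff₀ hk]
  calc s ^ (-κ) * v * (κ - 1) ≤ 3 ^ κ * (s + v) ^ (-κ) * v * (κ - 1) := by gcongr
    _ = 3 ^ κ * ((κ - 1) * (s + v) ^ (-κ) * v) := by ring
    _ ≤ _ := by gcongr

lemma path_sum {κ r : ℝ} (hκ : 1 < κ) (τ v : ℕ → ℝ) (n : ℕ) (hτ : ∀ i, i ≤ n → 0 < τ i)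
    (hv : ∀ i, 0 ≤ v i) (hr : ∀ i, τ i = τ (i + 1) + v i) :
    ∑ i ∈ range n, (if v i ≤ 2 * τ (i + 1) then (τ (i + 1) + r ^ 2) ^ (-κ) * v i else 0)
      ≤ 3 ^ κ / (κ - 1) * (τ n + r ^ 2) ^ (-(κ - 1)) := by
  have hk : 0 < κ - 1 := by linarith
  have hc : 0 < (3:ℝ) ^ κ / (κ - 1) := by positivity
  have h1 : ∀ i ∈ range n, (if v i ≤ 2 * τ (i + 1) then (τ (i + 1) + r ^ 2) ^ (-κ) * v i else 0)
      ≤ 3 ^ κ / (κ - 1) * (τ (i + 1) + r ^ 2) ^ (-(κ - 1))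
        - 3 ^ κ / (κ - 1) * (τ i + r ^ 2) ^ (-(κ - 1)) := by
    intro i hi
    have ht := hτ (i + 1) (by simp at hi; omega)
    have hv' := hv i
    have hsum : τ i + r ^ 2 = τ (i + 1) + r ^ 2 + v i := by rw [hr i]; ring
    rw [hsum, ← mul_sub]
    split_ifs with h
    · exact path_term hκ ht (by nlinarith [sq_nonneg r]) hv' h
    · refine mul_nonneg hc.le (sub_nonneg.2 ?_)
      exact Real.rpow_le_rpow_of_nonpos (by positivity) (by linarith) (by linarith)
  refine (sum_le_sum h1).trans ?_
  rw [sum_range_sub (fun i => 3 ^ κ / (κ - 1) * (τ i + r ^ 2) ^ (-(κ - 1)))]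
  have h0 := hτ 0 (by omega)
  have : 0 ≤ 3 ^ κ / (κ - 1) * (τ 0 + r ^ 2) ^ (-(κ - 1)) := by positivity
  linarith

lemma integrable_of_bdd {Ω : Type*} {mΩ : MeasurableSpace Ω} {μ : Measure Ω} [IsProbabilityMeasure μ]
    {Z : Ω → ℝ} {C : ℝ} (hZ : Measurable Z) (hC : ∀ ω, |Z ω| ≤ C) : Integrable Z μ := by
  have := integrable_bdd_mul hZ hC (integrable_const (1:ℝ) (μ := μ))
  simpa using this

lemma max_rpow_bound {a q : ℝ} (ha : 0 < a) (hq : 0 ≤ q) (r : ℝ) :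
    |(max a |r|) ^ (-q)| ≤ a ^ (-q) := by
  have : 0 < max a |r| := lt_max_of_lt_left ha
  rw [abs_of_nonneg (by positivity)]
  exact Real.rpow_le_rpow_of_nonpos ha (le_max_left _ _) (by linarith)

lemma psi_le {a q t r : ℝ} (ha : 0 < a) (hq : 0 ≤ q) (ht : a ^ 2 ≤ t) :
    (t + r ^ 2) ^ (-(q / 2)) ≤ (max a |r|) ^ (-q) := by
  have hm : 0 < max a |r| := lt_max_of_lt_left ha
  have h1 : (max a |r|) ^ 2 ≤ t + r ^ 2 := by
    rcases max_cases a |r| with h | h <;> rw [h.1]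
    · nlinarith [sq_nonneg r]
    · rw [sq_abs]; nlinarith [sq_nonneg a]
  calc (t + r ^ 2) ^ (-(q / 2)) ≤ ((max a |r|) ^ 2) ^ (-(q / 2)) :=
        Real.rpow_le_rpow_of_nonpos (by positivity) h1 (by linarith)
    _ = _ := by
        rw [← Real.rpow_natCast, ← Real.rpow_mul hm.le]; congr 1; push_cast; ring

lemma core_tel (p : ℝ) (hp : 1 < p) : ∃ C : ℝ, 0 < C ∧
    ∀ {Ω : Type} {mΩ : MeasurableSpace Ω} (μ : Measure Ω) [IsProbabilityMeasure μ]
      (ℱ : Filtration ℕ mΩ) (Y v : ℕ → Ω → ℝ) (_ : MDS μ ℱ Y v) (n : ℕ) (ε c z A : ℝ),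
      0 < ε → 1 ≤ A → (∀ ω, psum v n ω + (A * ε) ^ 2 ≤ c) →
      (∀ i < n, Integrable (fun ω => |Y i ω| ^ (2 * p)) μ) →
      |∫ ω, stdNormalCDF ((z - psum Y n ω) / Real.sqrt (c - psum v n ω)) ∂μ
        - stdNormalCDF (z / Real.sqrt c)| ≤
      C * (ε ^ (-(2 * p)) * ∑ i ∈ range n, ∫ ω, |Y i ω| ^ (2 * p) ∂μ
        + ε ^ (1 + 2 * (1 / (2 * p - 2))) *
          ∫ ω, (max (A * ε) |z - psum Y n ω|) ^ (-(1 + 2 * (1 / (2 * p - 2)))) ∂μ) := by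
  obtain ⟨C1, hC1, hone⟩ := one_step p hp
  set β := 1 / (2 * p - 2) with hβ
  have hβ0 : 0 < β := by rw [hβ]; apply one_div_pos.2; linarith
  set κ := 3 / 2 + β with hκ
  have hκ1 : 1 < κ := by rw [hκ]; linarith
  have hκ1' : 0 < κ - 1 := by linarith
  set K : ℝ := 2 * 13 ^ κ * (3 ^ κ / (κ - 1)) with hK
  have hK0 : 0 < K := by positivity
  refine ⟨C1 * (1 + K), by positivity, ?_⟩
  intro Ω mΩ μ _ ℱ Y v hM n ε c z A hε hA hc hYp
  set τ : ℕ → Ω → ℝ := fun k ω => c - psum v k ω with hτ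
  have hAε : 0 < A * ε := by positivity
  have hτn : ∀ k ≤ n, ∀ ω, (A * ε) ^ 2 ≤ τ k ω := fun k hk ω => by
    have := hM.psumv_mono hk ω
    have := hc ω
    simp only [hτ]; linarith
  have hεA : ε ^ 2 ≤ (A * ε) ^ 2 := pow_le_pow_left₀ hε.le (by nlinarith) 2
  have hτc : ∀ k ω, τ k ω ≤ c := fun k ω => by
    have := hM.psumv_nonneg k ω
    simp only [hτ]; linarith
  have hτs : ∀ k ω, τ k ω = τ (k + 1) ω + v k ω := fun k ω => by
    simp only [hτ, psum_succ]; ring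
  set G : ℕ → Ω → ℝ := fun i ω =>
    if v i ω ≤ 2 * τ (i + 1) ω then (τ (i + 1) ω + (z - psum Y n ω) ^ 2) ^ (-κ) * v i ω else 0 with hG
  have hSnm : Measurable (psum Y n) := (hM.psumY_m n).mono (ℱ.le _) le_rfl
  have hτm : ∀ k, Measurable[ℱ k] (τ (k + 1)) := fun k => (hM.psumv_m k).const_sub c
  have hτM : ∀ k, Measurable (τ (k + 1)) := fun k => (hτm k).mono (ℱ.le _) le_rfl
  have hstep : ∀ i ∈ range n,
      |∫ ω, stdNormalCDF ((z - psum Y (i + 1) ω) / Real.sqrt (τ (i + 1) ω)) ∂μ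
        - ∫ ω, stdNormalCDF ((z - psum Y i ω) / Real.sqrt (τ i ω)) ∂μ| ≤
      C1 * (ε ^ (-(2 * p)) * ∫ ω, |Y i ω| ^ (2 * p) ∂μ
        + ε ^ (1 + 2 * β) * (2 * 13 ^ κ * ∫ ω, G i ω ∂μ)) := by
    intro i hi
    rw [mem_range] at hi
    have h1 := hone μ (ℱ.le i) ε z (psum Y i) (τ (i + 1)) (v i) (Y i) hε
      (fun ω => hεA.trans (hτn (i + 1) hi ω)) (hM.v0 i) (hM.psumY_m i) (hτm i) (hM.vm i) (hM.Ymeas i)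
      (hM.vi i) (hM.Yi i) (hM.Y2i i) (hYp i hi)
      (fun Z c hZ hZc => hM.orth i Z hZ
        (integrable_bdd_mul (hZ.mono (ℱ.le i) le_rfl) hZc (hM.Yi i)))
      (fun Z c hZ hZc => hM.var i Z c hZ hZc)
    have h2 := conc (κ := κ) (by linarith) μ (ℱ.le i) ((A * ε) ^ 2) c z (psum Y i) (psum Y n)
      (τ (i + 1)) (v i) (by positivity) (hτn (i + 1) hi) (hτc _) (hM.v0 i) (hM.psumY_m i) (hτm i)
      (hM.vm i) hSnm ((hM.psumL2 n).sub (hM.psumL2 i)).integrable_sq (hM.vi i) (by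
        intro Z cc hZ hZ0 hZc
        have hZc' : ∀ ω, |Z ω| ≤ cc := fun ω => by rw [abs_of_nonneg (hZ0 ω)]; exact hZc ω
        have hZM := hZ.mono (ℱ.le i) le_rfl
        rw [hM.incr i Z cc hZ hZc' n hi.le]
        refine integral_mono (integrable_bdd_mul hZM hZc' ((hM.psumv_int n).sub (hM.psumv_int i)))
          (integrable_bdd_mul hZM hZc' (((integrable_const c).sub (hM.psumv_int (i+1))).add (hM.vi i)))
          fun ω => ?_
        refine mul_le_mul_of_nonneg_left ?_ (hZ0 ω)
        rw [← hτs]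
        have := hc ω
        simp only [hτ]
        nlinarith)
    have e1 : ∀ ω, z - psum Y (i + 1) ω = z - psum Y i ω - Y i ω := fun ω => by
      rw [psum_succ]; ring
    simp only [e1, hτs i]
    refine h1.trans (mul_le_mul_of_nonneg_left (add_le_add le_rfl ?_) hC1.le)
    have e2 : ∀ ω, (if v i ω ≤ 2 * τ (i + 1) ω then
        kern ε β (τ (i + 1) ω) (z - psum Y i ω) * v i ω else 0)
        = ε ^ (1 + 2 * β) * (if v i ω ≤ 2 * τ (i + 1) ω then
          (τ (i + 1) ω + (z - psum Y i ω) ^ 2) ^ (-κ) * v i ω else 0) := fun ω => by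
      split_ifs
      · simp only [kern, ← hκ]; ring
      · simp
    simp only [e2]
    rw [integral_const_mul]
    exact mul_le_mul_of_nonneg_left h2 (by positivity)
  have iG : ∀ i < n, Integrable (G i) μ := by
    intro i hi
    have hGM : MeasurableSet {ω | v i ω ≤ 2 * τ (i + 1) ω} :=
      measurableSet_le (hM.vmeas i) ((hτM i).const_mul 2)
    refine integrable_of_bdd (C := ((A * ε) ^ 2) ^ (-κ) * (2 * c)) (Measurable.ite hGM
      ((((hτM i).add ((hSnm.const_sub z).pow_const 2)).pow_const _).mul (hM.vmeas i)) measurable_const) ?_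
    intro ω
    have ht := hτn (i + 1) hi ω
    have ha : 0 < (A * ε) ^ 2 := by positivity
    have ht0 : 0 < τ (i + 1) ω := ha.trans_le ht
    have hc0 : 0 ≤ c := ht0.le.trans (hτc _ ω)
    have hv0 := hM.v0 i ω
    simp only [hG]
    split_ifs with h
    · rw [abs_of_nonneg (by positivity)]
      have h1 : (τ (i + 1) ω + (z - psum Y n ω) ^ 2) ^ (-κ) ≤ ((A * ε) ^ 2) ^ (-κ) :=
        Real.rpow_le_rpow_of_nonpos ha (by nlinarith [sq_nonneg (z - psum Y n ω)]) (by linarith)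
      have := hτc (i + 1) ω
      exact mul_le_mul h1 (by linarith) hv0 (by positivity)
    · simp; positivity
  have hmaxi : Integrable (fun ω => (max (A * ε) |z - psum Y n ω|) ^ (-(1 + 2 * β))) μ :=
    integrable_of_bdd (C := (A * ε) ^ (-(1 + 2 * β)))
      (((measurable_const.max (hSnm.const_sub z).abs)).pow_const _)
      (fun ω => max_rpow_bound hAε (by linarith) _)
  have hGsum : ∑ i ∈ range n, ∫ ω, G i ω ∂μ ≤
      3 ^ κ / (κ - 1) * ∫ ω, (max (A * ε) |z - psum Y n ω|) ^ (-(1 + 2 * β)) ∂μ := by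
    rw [← integral_finsetSum _ (fun i hi => iG i (mem_range.1 hi)), ← integral_const_mul]
    refine integral_mono (integrable_finsetSum _ fun i hi => iG i (mem_range.1 hi))
      (hmaxi.const_mul _) fun ω => ?_
    have h1 := path_sum (r := z - psum Y n ω) hκ1 (fun i => τ i ω) (fun i => v i ω) n
      (fun i hi => lt_of_lt_of_le (by positivity) (hτn i hi ω)) (fun i => hM.v0 i ω)
      (fun i => hτs i ω)
    refine h1.trans (mul_le_mul_of_nonneg_left ?_ (by positivity))
    have h2 := psi_le (q := 1 + 2 * β) (r := z - psum Y n ω) hAε (by linarith) (hτn n le_rfl ω)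
    rw [show κ - 1 = (1 + 2 * β) / 2 by rw [hκ]; ring]
    exact h2
  have htel : ∫ ω, stdNormalCDF ((z - psum Y n ω) / Real.sqrt (τ n ω)) ∂μ - stdNormalCDF (z / Real.sqrt c)
      = ∑ i ∈ range n, (∫ ω, stdNormalCDF ((z - psum Y (i + 1) ω) / Real.sqrt (τ (i + 1) ω)) ∂μ
        - ∫ ω, stdNormalCDF ((z - psum Y i ω) / Real.sqrt (τ i ω)) ∂μ) := by
    rw [sum_range_sub (fun i => ∫ ω, stdNormalCDF ((z - psum Y i ω) / Real.sqrt (τ i ω)) ∂μ)]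
    simp [hτ, psum_zero]
  change |∫ ω, stdNormalCDF ((z - psum Y n ω) / Real.sqrt (τ n ω)) ∂μ - stdNormalCDF (z / Real.sqrt c)| ≤ _
  rw [htel]
  refine (abs_sum_le_sum_abs _ _).trans ((sum_le_sum hstep).trans ?_)
  rw [← mul_sum, sum_add_distrib, ← mul_sum, ← mul_sum, ← mul_sum]
  set P := ε ^ (-(2 * p)) * ∑ i ∈ range n, ∫ ω, |Y i ω| ^ (2 * p) ∂μ with hP
  set I := ∫ ω, (max (A * ε) |z - psum Y n ω|) ^ (-(1 + 2 * β)) ∂μ with hI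
  have hP0 : 0 ≤ P := mul_nonneg (by positivity)
    (sum_nonneg fun i _ => integral_nonneg fun ω => by positivity)
  have hI0 : 0 ≤ I := integral_nonneg fun ω => by
    have : 0 < max (A * ε) |z - psum Y n ω| := lt_max_of_lt_left hAε
    positivity
  have hE0 : 0 ≤ ε ^ (1 + 2 * β) := by positivity
  rw [mul_assoc C1]
  refine mul_le_mul_of_nonneg_left ?_ hC1.le
  have h13 : (0:ℝ) ≤ 2 * 13 ^ κ := by positivity
  have h3 := mul_le_mul_of_nonneg_left (mul_le_mul_of_nonneg_left hGsum h13) hE0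
  have e : ε ^ (1 + 2 * β) * (2 * 13 ^ κ * (3 ^ κ / (κ - 1) * I)) = K * (ε ^ (1 + 2 * β) * I) := by
    rw [hK]; ring
  rw [e] at h3
  have h4 : 0 ≤ ε ^ (1 + 2 * β) * I := mul_nonneg hE0 hI0
  nlinarith [mul_nonneg hK0.le hP0]

lemma layer_prob {Ω : Type} {mΩ : MeasurableSpace Ω} (μ : Measure Ω) [IsProbabilityMeasure μ]
    (T : Ω → ℝ) (hT : Measurable T) (D : ℝ) (hD : ∀ z, |μ.real {ω | T ω ≤ z} - stdNormalCDF z| ≤ D)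
    (z r : ℝ) (hr : 0 < r) : μ.real {ω | |T ω - z| ≤ r} ≤ 3 * r + 2 * D := by
  have hs : {ω | |T ω - z| ≤ r} ⊆ {ω | T ω ≤ z + r} \ {ω | T ω ≤ z - 2 * r} := by
    intro ω h
    simp only [Set.mem_ofPred_eq, Set.mem_sdiff] at h ⊢
    rw [abs_le] at h
    constructor
    · linarith
    · push Not; linarith
  have h1 : μ.real {ω | |T ω - z| ≤ r} ≤ μ.real {ω | T ω ≤ z + r} - μ.real {ω | T ω ≤ z - 2 * r} := by
    rw [← measureReal_sdiff (by intro ω h; simp only [Set.mem_ofPred_eq] at h ⊢; linarith)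
      (measurableSet_le hT measurable_const)]
    exact measureReal_mono hs
  have h2 := abs_le.1 (hD (z + r))
  have h3 := abs_le.1 (hD (z - 2 * r))
  have h4 := abs_le.1 (cdf_lipschitz (z + r) (z - 2 * r))
  have h5 : |z + r - (z - 2 * r)| = 3 * r := by
    rw [show z + r - (z - 2 * r) = 3 * r by ring, abs_of_pos (by positivity)]
  rw [h5] at h4
  linarith [h2.2, h3.1, h4.2]

lemma layer {Ω : Type} {mΩ : MeasurableSpace Ω} (μ : Measure Ω) [IsProbabilityMeasure μ]
    (T : Ω → ℝ) (hT : Measurable T) (D : ℝ) (hD : ∀ z, |μ.real {ω | T ω ≤ z} - stdNormalCDF z| ≤ D)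
    (z a q : ℝ) (ha : 0 < a) (hq : 1 < q) :
    ∫ ω, (max a |z - T ω|) ^ (-q) ∂μ ≤ 3 * q / (q - 1) * a ^ (1 - q) + 2 * D * a ^ (-q) := by
  have hD0 : 0 ≤ D := (abs_nonneg _).trans (hD 0)
  have hq0 : 0 < q := by linarith
  have hm0 : ∀ ω, 0 < max a |z - T ω| := fun ω => lt_max_of_lt_left ha
  have hi : Integrable (fun ω => (max a |z - T ω|) ^ (-q)) μ :=
    integrable_of_bdd (C := a ^ (-q)) (((measurable_const.max (hT.const_sub z).abs)).pow_const _)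
      (fun ω => max_rpow_bound ha (by linarith) _)
  rw [hi.integral_eq_integral_Ioc_meas_le (M := a ^ (-q)) (ae_of_all _ fun ω => by
      have := hm0 ω
      show (0:ℝ) ≤ _
      positivity)
    (ae_of_all _ fun ω => (le_abs_self _).trans (max_rpow_bound ha (by linarith) _))]
  have hM : 0 < a ^ (-q) := by positivity
  rw [← intervalIntegral.integral_of_le hM.le]
  have hpt : ∀ t ∈ Set.Ioc 0 (a ^ (-q)), μ.real {ω | t ≤ (max a |z - T ω|) ^ (-q)}
      ≤ 3 * t ^ (-(1 / q)) + 2 * D := by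
    intro t ht
    have ht0 := ht.1
    refine le_trans (measureReal_mono ?_) (layer_prob μ T hT D hD z (t ^ (-(1 / q))) (by positivity))
    intro ω h
    simp only [Set.mem_ofPred_eq] at h ⊢
    have h1 : ((max a |z - T ω|) ^ (-q)) ^ (-(1 / q)) ≤ t ^ (-(1 / q)) :=
      Real.rpow_le_rpow_of_nonpos ht0 h (by
        have : 0 < 1 / q := by positivity
        linarith)
    rw [← Real.rpow_mul (hm0 ω).le, show -q * -(1 / q) = 1 by field_simp, Real.rpow_one] at h1
    rw [abs_sub_comm]
    exact (le_max_right _ _).trans h1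
  have hq1 : -1 < -(1 / q) := by
    have : 1 / q < 1 := by rw [div_lt_one hq0]; exact hq
    linarith
  have ii : IntervalIntegrable (fun t : ℝ => 3 * t ^ (-(1 / q)) + 2 * D) volume 0 (a ^ (-q)) :=
    ((intervalIntegral.intervalIntegrable_rpow' hq1).const_mul 3).add intervalIntegrable_const
  have hle : ∫ t in (0:ℝ)..(a ^ (-q)), μ.real {ω | t ≤ (max a |z - T ω|) ^ (-q)}
      ≤ ∫ t in (0:ℝ)..(a ^ (-q)), (3 * t ^ (-(1 / q)) + 2 * D) := by
    rw [intervalIntegral.integral_of_le hM.le, intervalIntegral.integral_of_le hM.le]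
    refine setIntegral_mono_on ?_ ((intervalIntegrable_iff_integrableOn_Ioc_of_le hM.le).1 ii)
      measurableSet_Ioc hpt
    have hanti : Antitone (fun t : ℝ => μ.real {ω | t ≤ (max a |z - T ω|) ^ (-q)}) :=
      fun s t hst => measureReal_mono fun ω h => by
        simp only [Set.mem_ofPred_eq] at h ⊢; exact hst.trans h
    exact (hanti.intervalIntegrable (a := 0) (b := a ^ (-q))).1
  refine hle.trans (le_of_eq ?_)
  rw [intervalIntegral.integral_add ((intervalIntegral.intervalIntegrable_rpow' hq1).const_mul 3)
    intervalIntegrable_const, intervalIntegral.integral_const_mul, integral_rpow (Or.inl hq1),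
    intervalIntegral.integral_const, Real.zero_rpow (by linarith), ← Real.rpow_mul ha.le,
    show -q * (-(1 / q) + 1) = 1 - q by field_simp; ring]
  have hq2 : q - 1 ≠ 0 := by linarith
  simp only [sub_zero, smul_eq_mul]
  have : -(1 / q) + 1 = (q - 1) / q := by field_simp; ring
  rw [this]
  field_simp

lemma smoothing {Ω : Type} {mΩ : MeasurableSpace Ω} (μ : Measure Ω) [IsProbabilityMeasure μ]
    (T τ : Ω → ℝ) (hT : Measurable T) (hτ : Measurable τ) (hτ0 : ∀ ω, 0 < τ ω)
    (D E η l : ℝ) (hl : 0 < l) (hη : μ.real {ω | l ^ 2 < τ ω} ≤ η)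
    (hD : ∀ z, |μ.real {ω | T ω ≤ z} - stdNormalCDF z| ≤ D)
    (hE : ∀ z, |∫ ω, stdNormalCDF ((z - T ω) / Real.sqrt (τ ω)) ∂μ - stdNormalCDF z| ≤ E) (z : ℝ) :
    |μ.real {ω | T ω ≤ z} - stdNormalCDF z| ≤ E + η + 6 * l + D / 8 := by
  set h := 4 * l with hh
  have hh0 : 0 < h := by positivity
  have hBm : MeasurableSet {ω | l ^ 2 < τ ω} := measurableSet_lt measurable_const hτ
  have hFm : MeasurableSet {ω | T ω ≤ z} := measurableSet_le hT measurable_const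
  have hBi : Integrable (Set.indicator {ω | l ^ 2 < τ ω} (fun _ => (1:ℝ))) μ :=
    (integrable_const 1).indicator hBm
  have hFi : Integrable (Set.indicator {ω | T ω ≤ z} (fun _ => (1:ℝ))) μ :=
    (integrable_const 1).indicator hFm
  have hBint : ∫ ω, Set.indicator {ω | l ^ 2 < τ ω} (fun _ => (1:ℝ)) ω ∂μ ≤ η := by
    rw [integral_indicator_const _ hBm]; simpa using hη
  have hFint : ∫ ω, Set.indicator {ω | T ω ≤ z} (fun _ => (1:ℝ)) ω ∂μ = μ.real {ω | T ω ≤ z} := by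
    rw [integral_indicator_const _ hFm]; simp
  have hΦi : ∀ w, Integrable (fun ω => stdNormalCDF ((w - T ω) / Real.sqrt (τ ω))) μ := fun w =>
    integrable_of_bdd (C := 1) (cdf_measurable.comp ((hT.const_sub w).div hτ.sqrt))
      (fun ω => by rw [abs_of_nonneg (cdf_nonneg _)]; exact cdf_le_one _)
  have hmi : ∀ w, Integrable (fun ω => l ^ 2 * (max h |w - T ω|) ^ (-2:ℝ)) μ := fun w =>
    (integrable_of_bdd (C := h ^ (-2:ℝ)) (((measurable_const.max (hT.const_sub w).abs)).pow_const _)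
      (fun ω => max_rpow_bound hh0 (by norm_num) _)).const_mul _
  have hmint : ∀ w, ∫ ω, l ^ 2 * (max h |w - T ω|) ^ (-2:ℝ) ∂μ ≤ 3 / 2 * l + D / 8 := by
    intro w
    rw [integral_const_mul]
    have h1 := layer μ T hT D hD w h 2 hh0 (by norm_num)
    have h2 : h ^ (1 - 2 : ℝ) = 1 / (4 * l) := by
      rw [show (1 - 2 : ℝ) = -1 by norm_num, Real.rpow_neg_one, one_div]
    have h3 : h ^ (-2 : ℝ) = 1 / (16 * l ^ 2) := by
      rw [Real.rpow_neg hh0.le, Real.rpow_two, hh, one_div]; congr 1; ring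
    rw [h2, h3] at h1
    refine (mul_le_mul_of_nonneg_left h1 (by positivity)).trans (le_of_eq ?_)
    field_simp; ring
  have hs0 : ∀ ω, 0 < Real.sqrt (τ ω) := fun ω => Real.sqrt_pos.2 (hτ0 ω)
  have tail : ∀ ω w, ¬ l ^ 2 < τ ω → h ≤ |w - T ω| →
      1 / ((|w - T ω|) / Real.sqrt (τ ω)) ^ 2 ≤ l ^ 2 * (max h |w - T ω|) ^ (-2:ℝ) := by
    intro ω w hb hw
    have hw0 : 0 < |w - T ω| := hh0.trans_le hw
    push Not at hb
    rw [max_eq_right hw, Real.rpow_neg hw0.le, Real.rpow_two, div_pow, Real.sq_sqrt (hτ0 ω).le,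
      one_div_div, div_eq_mul_inv]
    gcongr
  have up : μ.real {ω | T ω ≤ z} ≤ ∫ ω, stdNormalCDF ((z + h - T ω) / Real.sqrt (τ ω)) ∂μ
      + η + (3 / 2 * l + D / 8) := by
    rw [← hFint]
    have i1 : Integrable (fun ω => stdNormalCDF ((z + h - T ω) / Real.sqrt (τ ω))
      + Set.indicator {ω | l ^ 2 < τ ω} (fun _ => (1:ℝ)) ω) μ := (hΦi _).add hBi
    have i2 : Integrable (fun ω => stdNormalCDF ((z + h - T ω) / Real.sqrt (τ ω))
      + Set.indicator {ω | l ^ 2 < τ ω} (fun _ => (1:ℝ)) ω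
      + l ^ 2 * (max h |z + h - T ω|) ^ (-2:ℝ)) μ := i1.add (hmi _)
    refine (integral_mono hFi i2 fun ω => ?_).trans ?_
    · have c0 := cdf_nonneg ((z + h - T ω) / Real.sqrt (τ ω))
      have m0 : 0 ≤ l ^ 2 * (max h |z + h - T ω|) ^ (-2:ℝ) := by
        have : 0 < max h |z + h - T ω| := lt_max_of_lt_left hh0
        positivity
      by_cases hb : l ^ 2 < τ ω
      · have e : Set.indicator {ω | l ^ 2 < τ ω} (fun _ => (1:ℝ)) ω = 1 :=
          Set.indicator_of_mem (by exact hb) _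
        simp only [e]
        have : Set.indicator {ω | T ω ≤ z} (fun _ => (1:ℝ)) ω ≤ 1 :=
          Set.indicator_apply_le' (fun _ => le_rfl) (fun _ => zero_le_one)
        linarith
      · have e : Set.indicator {ω | l ^ 2 < τ ω} (fun _ => (1:ℝ)) ω = 0 :=
          Set.indicator_of_notMem (by exact hb) _
        simp only [e]
        refine Set.indicator_apply_le' (fun hF => ?_) (fun _ => by linarith)
        have hF' : T ω ≤ z := hF
        have hpos : 0 < z + h - T ω := by linarith
        have ht := tail ω (z + h) hb (by rw [abs_of_pos hpos]; linarith)
        have hc := cdf_right_tail (y := (z + h - T ω) / Real.sqrt (τ ω)) (div_pos hpos (hs0 ω))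
        rw [abs_of_pos hpos] at ht ⊢
        linarith
    · rw [integral_add i1 (hmi _), integral_add (hΦi _) hBi]
      linarith [hmint (z + h)]
  have lo : ∫ ω, stdNormalCDF ((z - h - T ω) / Real.sqrt (τ ω)) ∂μ ≤ μ.real {ω | T ω ≤ z}
      + η + (3 / 2 * l + D / 8) := by
    rw [← hFint]
    have i1 : Integrable (fun ω => Set.indicator {ω | T ω ≤ z} (fun _ => (1:ℝ)) ω
      + Set.indicator {ω | l ^ 2 < τ ω} (fun _ => (1:ℝ)) ω) μ := hFi.add hBi
    have i2 : Integrable (fun ω => Set.indicator {ω | T ω ≤ z} (fun _ => (1:ℝ)) ω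
      + Set.indicator {ω | l ^ 2 < τ ω} (fun _ => (1:ℝ)) ω
      + l ^ 2 * (max h |z - h - T ω|) ^ (-2:ℝ)) μ := i1.add (hmi _)
    refine (integral_mono (hΦi _) i2 fun ω => ?_).trans ?_
    · have c1 := cdf_le_one ((z - h - T ω) / Real.sqrt (τ ω))
      have m0 : 0 ≤ l ^ 2 * (max h |z - h - T ω|) ^ (-2:ℝ) := by
        have : 0 < max h |z - h - T ω| := lt_max_of_lt_left hh0
        positivity
      have a0 : 0 ≤ Set.indicator {ω | T ω ≤ z} (fun _ => (1:ℝ)) ω :=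
        Set.indicator_nonneg (fun _ _ => zero_le_one) ω
      have b0 : 0 ≤ Set.indicator {ω | l ^ 2 < τ ω} (fun _ => (1:ℝ)) ω :=
        Set.indicator_nonneg (fun _ _ => zero_le_one) ω
      by_cases hb : l ^ 2 < τ ω
      · have e : Set.indicator {ω | l ^ 2 < τ ω} (fun _ => (1:ℝ)) ω = 1 :=
          Set.indicator_of_mem (by exact hb) _
        simp only [e]
        linarith
      · by_cases hF : T ω ≤ z
        · have e : Set.indicator {ω | T ω ≤ z} (fun _ => (1:ℝ)) ω = 1 :=
            Set.indicator_of_mem (by exact hF) _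
          simp only [e]
          linarith
        · push Not at hF
          have hneg : z - h - T ω < 0 := by linarith
          have ht := tail ω (z - h) hb (by rw [abs_of_neg hneg]; linarith)
          have hc := cdf_left_tail (y := (-(z - h - T ω)) / Real.sqrt (τ ω)) (div_pos (by linarith) (hs0 ω))
          rw [abs_of_neg hneg] at ht
          rw [neg_div, neg_neg] at hc
          rw [neg_div] at ht
          rw [abs_of_neg hneg] at m0 ⊢
          simp only []
          linarith
    · rw [integral_add i1 (hmi _), integral_add hFi hBi]
      linarith [hmint (z - h)]
  have e1 := abs_le.1 (hE (z + h))
  have e2 := abs_le.1 (hE (z - h))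
  have l1 := abs_le.1 (cdf_lipschitz (z + h) z)
  have l2 := abs_le.1 (cdf_lipschitz (z - h) z)
  rw [show z + h - z = h by ring, abs_of_pos hh0] at l1
  rw [show z - h - z = -h by ring, abs_neg, abs_of_pos hh0] at l2
  rw [abs_le]
  constructor
  · linarith [e2.1, l2.1]
  · linarith [e1.2, l1.2]

lemma core_A (p : ℝ) (hp : 1 < p) : ∃ B : ℝ, 0 < B ∧
    ∀ {Ω : Type} {mΩ : MeasurableSpace Ω} (μ : Measure Ω) [IsProbabilityMeasure μ]
      (ℱ : Filtration ℕ mΩ) (Y v : ℕ → Ω → ℝ) (_ : MDS μ ℱ Y v) (n : ℕ) (ε : ℝ),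
      0 < ε → ε ≤ 1 → (∀ ω, psum v n ω ≤ 1 + ε ^ 2) →
      (∀ i < n, Integrable (fun ω => |Y i ω| ^ (2 * p)) μ) →
      ∑ i ∈ range n, ∫ ω, |Y i ω| ^ (2 * p) ∂μ ≤ ε ^ (2 * p + 1) →
      μ.real {ω | psum v n ω < 1 - ε ^ 2} ≤ ε →
      ∀ z, |μ.real {ω | psum Y n ω ≤ z} - stdNormalCDF z| ≤ B * ε := by
  obtain ⟨C, hC, htel⟩ := core_tel p hp
  set β := 1 / (2 * p - 2) with hβ
  have hβ0 : 0 < β := by rw [hβ]; apply one_div_pos.2; linarith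
  set q := 1 + 2 * β with hq
  have hq1 : 1 < q := by rw [hq]; linarith
  have hq10 : 0 < q - 1 := by linarith
  set A : ℝ := 8 * C + 1 with hA
  have hA1 : 1 ≤ A := by rw [hA]; linarith
  have hA0 : 0 < A := by linarith
  set Cq := 3 * q / (q - 1) with hCq
  have hCq0 : 0 < Cq := by positivity
  set L := Real.sqrt (A ^ 2 + 2) with hL
  have hL0 : 0 < L := Real.sqrt_pos.2 (by positivity)
  have hLsq : L ^ 2 = A ^ 2 + 2 := Real.sq_sqrt (by positivity)
  have hL1 : 1 ≤ L := by nlinarith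
  set B2 := C * (1 + Cq) + (1 + A ^ 2) * L with hB2
  have hB20 : 0 < B2 := by positivity
  refine ⟨2 * (B2 + 1 + 6 * L), by positivity, ?_⟩
  intro Ω mΩ μ _ ℱ Y v hM n ε hε hε1 hV hYp hYs hbad
  set c := 1 + ε ^ 2 + (A * ε) ^ 2 with hc
  have hc1 : 1 ≤ c := by rw [hc]; nlinarith [sq_nonneg ε, sq_nonneg (A * ε)]
  have hAε : 0 < A * ε := by positivity
  have hSm : Measurable (psum Y n) := (hM.psumY_m n).mono (ℱ.le _) le_rfl
  have hVm : Measurable (psum v n) := by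
    unfold psum; exact Finset.measurable_fun_sum _ fun i _ => hM.vmeas i
  have hε2 : ε ^ 2 ≤ ε := by nlinarith
  -- scale
  have hscale : ∀ z, |stdNormalCDF (z / Real.sqrt c) - stdNormalCDF z| ≤ (1 + A ^ 2) * L * ε := by
    intro z
    have hcs : 1 ≤ Real.sqrt c := Real.one_le_sqrt.2 hc1
    have hcL : Real.sqrt c ≤ L := Real.sqrt_le_sqrt (by
      rw [hc, mul_pow]; nlinarith [sq_nonneg A, mul_le_mul_of_nonneg_left (hε2.trans hε1) (sq_nonneg A)])
    have h1 := cdf_scale z (1 / Real.sqrt c) (1 / L) (by positivity)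
      (by rw [div_le_one hL0]; exact hL1) (one_div_le_one_div_of_le (by linarith) hcL)
    rw [mul_one_div] at h1
    refine h1.trans ?_
    rw [div_div_eq_mul_div, div_one]
    have h2 : |1 / Real.sqrt c - 1| ≤ (1 + A ^ 2) * ε := by
      have h3 : 1 / Real.sqrt c ≤ 1 := by rw [div_le_one (by linarith)]; exact hcs
      rw [abs_of_nonpos (by linarith)]
      have h4 : -(1 / Real.sqrt c - 1) ≤ Real.sqrt c - 1 := by
        have : 0 < Real.sqrt c := by linarith
        have : 1 / Real.sqrt c = (Real.sqrt c) ⁻¹ := one_div _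
        have h5 : 2 ≤ Real.sqrt c + 1 / Real.sqrt c := by
          rw [← sub_nonneg]
          have e : Real.sqrt c + 1 / Real.sqrt c - 2 = (Real.sqrt c - 1) ^ 2 / Real.sqrt c := by
            field_simp; ring
          rw [e]; positivity
        linarith
      have h6 : Real.sqrt c ≤ c := by
        have := Real.sq_sqrt (show 0 ≤ c by linarith)
        nlinarith
      have h7 : c - 1 ≤ (1 + A ^ 2) * ε := by
        rw [hc, mul_pow]; nlinarith [mul_le_mul_of_nonneg_left hε2 (sq_nonneg A)]
      linarith
    calc |1 / Real.sqrt c - 1| * L ≤ (1 + A ^ 2) * ε * L := by gcongr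
      _ = _ := by ring
  have key : ∀ D, (∀ z, |μ.real {ω | psum Y n ω ≤ z} - stdNormalCDF z| ≤ D) →
      ∀ z, |μ.real {ω | psum Y n ω ≤ z} - stdNormalCDF z| ≤ (B2 + 1 + 6 * L) * ε + D / 2 := by
    intro D hD z
    have hD0 : 0 ≤ D := (abs_nonneg _).trans (hD 0)
    have hE : ∀ z, |∫ ω, stdNormalCDF ((z - psum Y n ω) / Real.sqrt (c - psum v n ω)) ∂μ
        - stdNormalCDF z| ≤ B2 * ε + D / 4 := by
      intro z
      have h1 := htel μ ℱ Y v hM n ε c z A hε hA1 (fun ω => by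
        have := hV ω
        rw [hc]; linarith) hYp
      have h2 := layer μ (psum Y n) hSm D hD z (A * ε) q hAε hq1
      have h3 : ε ^ (-(2 * p)) * ∑ i ∈ range n, ∫ ω, |Y i ω| ^ (2 * p) ∂μ ≤ ε := by
        calc _ ≤ ε ^ (-(2 * p)) * ε ^ (2 * p + 1) := by gcongr
          _ = ε := by rw [← Real.rpow_add hε]; ring_nf; exact Real.rpow_one _
      have h4 : ε ^ q * ∫ ω, (max (A * ε) |z - psum Y n ω|) ^ (-q) ∂μ ≤ Cq * ε + D / (4 * C) := by
        refine (mul_le_mul_of_nonneg_left h2 (by positivity)).trans ?_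
        have e1 : ε ^ q * (A * ε) ^ (1 - q) ≤ ε := by
          rw [Real.mul_rpow hA0.le hε.le]
          have a1 : A ^ (1 - q) ≤ 1 := Real.rpow_le_one_of_one_le_of_nonpos hA1 (by linarith)
          calc ε ^ q * (A ^ (1 - q) * ε ^ (1 - q)) = A ^ (1 - q) * (ε ^ q * ε ^ (1 - q)) := by ring
            _ = A ^ (1 - q) * ε := by
                rw [← Real.rpow_add hε]; congr 1
                rw [show q + (1 - q) = 1 by ring, Real.rpow_one]
            _ ≤ 1 * ε := by gcongr
            _ = ε := one_mul _
        have e2 : ε ^ q * (A * ε) ^ (-q) ≤ 1 / (8 * C) := by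
          rw [Real.mul_rpow hA0.le hε.le]
          calc ε ^ q * (A ^ (-q) * ε ^ (-q)) = A ^ (-q) * (ε ^ q * ε ^ (-q)) := by ring
            _ = A ^ (-q) := by rw [← Real.rpow_add hε]; simp
            _ ≤ A ^ (-1:ℝ) := Real.rpow_le_rpow_of_exponent_le hA1 (by linarith)
            _ = 1 / A := by rw [Real.rpow_neg_one, one_div]
            _ ≤ 1 / (8 * C) := one_div_le_one_div_of_le (by positivity) (by rw [hA]; linarith)
        calc ε ^ q * (Cq * (A * ε) ^ (1 - q) + 2 * D * (A * ε) ^ (-q))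
            = Cq * (ε ^ q * (A * ε) ^ (1 - q)) + 2 * D * (ε ^ q * (A * ε) ^ (-q)) := by ring
          _ ≤ Cq * ε + 2 * D * (1 / (8 * C)) := by gcongr
          _ = _ := by field_simp; ring
      have h5 := h1.trans (mul_le_mul_of_nonneg_left (add_le_add h3 h4) hC.le)
      have e : C * (ε + (Cq * ε + D / (4 * C))) = C * (1 + Cq) * ε + D / 4 := by
        field_simp; ring
      rw [e] at h5
      have h6 := abs_sub_le (∫ ω, stdNormalCDF ((z - psum Y n ω) / Real.sqrt (c - psum v n ω)) ∂μ)
        (stdNormalCDF (z / Real.sqrt c)) (stdNormalCDF z)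
      have h7 := hscale z
      rw [hB2]
      linarith
    have hτ0 : ∀ ω, 0 < c - psum v n ω := fun ω => by
      have h1 := hV ω
      have h2 : 0 < (A * ε) ^ 2 := by positivity
      rw [hc]; linarith
    have hη : μ.real {ω | (L * ε) ^ 2 < c - psum v n ω} ≤ ε := by
      refine le_trans (measureReal_mono ?_) hbad
      intro ω h
      simp only [Set.mem_ofPred_eq] at h ⊢
      rw [mul_pow, hLsq, hc, mul_pow] at h
      nlinarith
    have h8 := smoothing μ (psum Y n) (fun ω => c - psum v n ω) hSm (hVm.const_sub c) hτ0 D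
      (B2 * ε + D / 4) ε (L * ε) (by positivity) hη hD hE z
    refine h8.trans ?_
    nlinarith
  -- supremum
  have hb1 : ∀ z, |μ.real {ω | psum Y n ω ≤ z} - stdNormalCDF z| ≤ 1 := fun z => by
    have a := cdf_nonneg z
    have b := cdf_le_one z
    have c1 : 0 ≤ μ.real {ω | psum Y n ω ≤ z} := measureReal_nonneg
    have c2 : μ.real {ω | psum Y n ω ≤ z} ≤ 1 := measureReal_le_one
    rw [abs_le]; constructor <;> linarith
  have hbdd : BddAbove (Set.range fun z => |μ.real {ω | psum Y n ω ≤ z} - stdNormalCDF z|) :=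
    ⟨1, by rintro _ ⟨z, rfl⟩; exact hb1 z⟩
  have hD := fun z => le_ciSup hbdd z
  have h9 := ciSup_le (key _ hD)
  intro z
  have h10 := hD z
  linarith

lemma meas_diff_le {Ω : Type} {mΩ : MeasurableSpace Ω} (μ : Measure Ω) [IsProbabilityMeasure μ]
    {A B E : Set Ω} (h1 : A ⊆ B ∪ E) : μ.real A ≤ μ.real B + μ.real E :=
  (measureReal_mono h1).trans (measureReal_union_le _ _)

lemma core_B (p : ℝ) (hp : 1 < p) : ∃ B : ℝ, 0 < B ∧
    ∀ {Ω : Type} {mΩ : MeasurableSpace Ω} (μ : Measure Ω) [IsProbabilityMeasure μ]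
      (ℱ : Filtration ℕ mΩ) (Y v : ℕ → Ω → ℝ) (_ : MDS μ ℱ Y v) (n : ℕ) (ε : ℝ),
      0 < ε → ε ≤ 1 →
      (∀ i < n, Integrable (fun ω => |Y i ω| ^ (2 * p)) μ) →
      ∑ i ∈ range n, ∫ ω, |Y i ω| ^ (2 * p) ∂μ ≤ ε ^ (2 * p + 1) →
      μ.real {ω | ε ^ 2 < |psum v n ω - 1|} ≤ ε →
      ∀ z, |μ.real {ω | psum Y n ω ≤ z} - stdNormalCDF z| ≤ B * ε := by
  obtain ⟨B, hB, hA⟩ := core_A p hp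
  refine ⟨B + 1, by positivity, ?_⟩
  intro Ω mΩ μ _ ℱ Y v hM n ε hε hε1 hYp hYs hbad z
  set χ : ℕ → Ω → ℝ := fun i ω => if psum v (i + 1) ω ≤ 1 + ε ^ 2 then 1 else 0 with hχ
  have hχm : ∀ i, Measurable[ℱ i] (χ i) := fun i =>
    Measurable.ite (measurableSet_le (hM.psumv_m i) measurable_const) measurable_const measurable_const
  have hχM : ∀ i, Measurable (χ i) := fun i => (hχm i).mono (ℱ.le _) le_rfl
  have hχ01 : ∀ i ω, χ i ω = 0 ∨ χ i ω = 1 := fun i ω => by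
    simp only [hχ]; split_ifs <;> simp
  have hχb : ∀ i ω, |χ i ω| ≤ 1 := fun i ω => by
    rcases hχ01 i ω with h | h <;> rw [h] <;> simp
  set Y' : ℕ → Ω → ℝ := fun i ω => χ i ω * Y i ω with hY'
  set v' : ℕ → Ω → ℝ := fun i ω => χ i ω * v i ω with hv'
  have hM' : MDS μ ℱ Y' v' := by
    refine ⟨fun i => ((hχm i).mono (ℱ.mono (Nat.le_succ i)) le_rfl).mul (hM.Ym i),
      fun i => (hχm i).mul (hM.vm i), ?_, fun i => integrable_bdd_mul (hχM i) (hχb i) (hM.Yi i), ?_,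
      fun i => integrable_bdd_mul (hχM i) (hχb i) (hM.vi i), ?_, ?_⟩
    · intro i ω
      have := hM.v0 i ω
      rcases hχ01 i ω with h | h <;> simp [hv', h, this]
    · intro i
      refine (integrable_bdd_mul (hχM i) (hχb i) (hM.Y2i i)).congr (ae_of_all _ fun ω => ?_)
      rcases hχ01 i ω with h | h <;> simp [hY', h]
    · intro i Z hZ hi
      have e : ∀ ω, Z ω * Y' i ω = (Z ω * χ i ω) * Y i ω := fun ω => by simp only [hY']; ring
      simp only [e] at hi ⊢
      exact hM.orth i (fun ω => Z ω * χ i ω) (hZ.mul (hχm i)) hi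
    · intro i Z c hZ hc
      have e : ∀ ω, Z ω * Y' i ω ^ 2 = (Z ω * χ i ω) * Y i ω ^ 2 := fun ω => by
        rcases hχ01 i ω with h | h <;> simp [hY', h]
      have e' : ∀ ω, Z ω * v' i ω = (Z ω * χ i ω) * v i ω := fun ω => by simp only [hv']; ring
      simp only [e, e']
      refine hM.var i (fun ω => Z ω * χ i ω) c (hZ.mul (hχm i)) fun ω => ?_
      rw [abs_mul]
      have := hχb i ω
      have h0 := abs_nonneg (Z ω)
      exact (mul_le_of_le_one_right h0 this).trans (hc ω)
  have hle : ∀ k ω, psum v' k ω ≤ psum v k ω := fun k ω => by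
    unfold psum
    refine sum_le_sum fun i _ => ?_
    have := hM.v0 i ω
    rcases hχ01 i ω with h | h <;> simp [hv', h, this]
  have hV' : ∀ k ω, psum v' k ω ≤ 1 + ε ^ 2 := by
    intro k ω
    induction k with
    | zero => rw [psum_zero]; positivity
    | succ k ih =>
      by_cases h : psum v (k + 1) ω ≤ 1 + ε ^ 2
      · exact (hle _ ω).trans h
      · rw [psum_succ]; simpa [hv', hχ, h] using ih
  have heq : ∀ ω, psum v n ω ≤ 1 + ε ^ 2 → ∀ i < n, χ i ω = 1 := by
    intro ω h i hi
    have := (hM.psumv_mono (show i + 1 ≤ n from hi) ω).trans h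
    simp [hχ, this]
  have heqY : ∀ ω, psum v n ω ≤ 1 + ε ^ 2 → psum Y' n ω = psum Y n ω := by
    intro ω h
    unfold psum
    refine sum_congr rfl fun i hi => ?_
    simp [hY', heq ω h i (mem_range.1 hi)]
  have heqv : ∀ ω, psum v n ω ≤ 1 + ε ^ 2 → psum v' n ω = psum v n ω := by
    intro ω h
    unfold psum
    refine sum_congr rfl fun i hi => ?_
    simp [hv', heq ω h i (mem_range.1 hi)]
  have hYp' : ∀ i ω, |Y' i ω| ^ (2 * p) = χ i ω * |Y i ω| ^ (2 * p) := fun i ω => by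
    rcases hχ01 i ω with h | h <;> simp [hY', h]
    exact Real.zero_rpow (by linarith)
  have hYint' : ∀ i < n, Integrable (fun ω => |Y' i ω| ^ (2 * p)) μ := fun i hi => by
    simp only [hYp']
    exact integrable_bdd_mul (hχM i) (hχb i) (hYp i hi)
  have hbadsub : ∀ ω, ¬ psum v n ω ≤ 1 + ε ^ 2 → ω ∈ {ω | ε ^ 2 < |psum v n ω - 1|} := fun ω h => by
    push Not at h
    simp only [Set.mem_ofPred_eq]
    exact lt_of_lt_of_le (by linarith) (le_abs_self _)
  have h1 := hA μ ℱ Y' v' hM' n ε hε hε1 (hV' n) hYint' (by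
    refine le_trans (sum_le_sum fun i hi => ?_) hYs
    refine integral_mono (hYint' i (mem_range.1 hi)) (hYp i (mem_range.1 hi)) fun ω => ?_
    simp only [hYp']
    have : 0 ≤ |Y i ω| ^ (2 * p) := by positivity
    rcases hχ01 i ω with h | h <;> simp [h, this]) (by
    refine le_trans (measureReal_mono ?_) hbad
    intro ω hω
    by_cases h : psum v n ω ≤ 1 + ε ^ 2
    · simp only [Set.mem_ofPred_eq] at hω ⊢
      rw [heqv ω h] at hω
      rw [abs_sub_comm]
      exact lt_of_lt_of_le (by linarith) (le_abs_self _)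
    · exact hbadsub ω h) z
  have h2 : μ.real {ω | psum Y n ω ≤ z} ≤ μ.real {ω | psum Y' n ω ≤ z}
      + μ.real {ω | ε ^ 2 < |psum v n ω - 1|} := by
    refine meas_diff_le μ fun ω hω => ?_
    by_cases h : psum v n ω ≤ 1 + ε ^ 2
    · left
      simp only [Set.mem_ofPred_eq] at hω ⊢
      rw [heqY ω h]; exact hω
    · exact Or.inr (hbadsub ω h)
  have h3 : μ.real {ω | psum Y' n ω ≤ z} ≤ μ.real {ω | psum Y n ω ≤ z}
      + μ.real {ω | ε ^ 2 < |psum v n ω - 1|} := by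
    refine meas_diff_le μ fun ω hω => ?_
    by_cases h : psum v n ω ≤ 1 + ε ^ 2
    · left
      simp only [Set.mem_ofPred_eq] at hω ⊢
      rw [← heqY ω h]; exact hω
    · exact Or.inr (hbadsub ω h)
  rw [abs_le] at h1 ⊢
  constructor <;> linarith [h1.1, h1.2]

lemma exp_mart {Ω : Type} {mΩ : MeasurableSpace Ω} (μ : Measure Ω) [IsProbabilityMeasure μ]
    (ℱ : Filtration ℕ mΩ) (w g : ℕ → Ω → ℝ) (b s : ℝ) (hb : 0 < b) (hb1 : b ≤ 1) (hs : |s| = 1)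
    (hwm : ∀ i, Measurable[ℱ (i + 1)] (w i)) (hgm : ∀ i, Measurable[ℱ i] (g i))
    (hw0 : ∀ i ω, 0 ≤ w i ω) (hwb : ∀ i ω, w i ω ≤ b ^ 2)
    (hg0 : ∀ i ω, 0 ≤ g i ω) (hgb : ∀ i ω, g i ω ≤ b ^ 2)
    (hwg : ∀ i (Z : Ω → ℝ) (c : ℝ), Measurable[ℱ i] Z → (∀ ω, |Z ω| ≤ c) →
      ∫ ω, Z ω * w i ω ∂μ = ∫ ω, Z ω * g i ω ∂μ) (k : ℕ) :
    Integrable (fun ω => Real.exp (s * (psum w k ω - psum g k ω) / b - psum g k ω)) μ ∧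
    ∫ ω, Real.exp (s * (psum w k ω - psum g k ω) / b - psum g k ω) ∂μ ≤ 1 := by
  have hb2 : b ^ 2 ≤ 1 := by nlinarith
  have hss : s ^ 2 = 1 := by rw [← sq_abs, hs]; norm_num
  have hPw : ∀ k ω, 0 ≤ psum w k ω ∧ psum w k ω ≤ k := fun k ω => by
    constructor
    · exact sum_nonneg fun i _ => hw0 i ω
    · unfold psum
      refine (sum_le_sum fun i _ => (hwb i ω).trans hb2).trans ?_
      simp
  have hPg : ∀ k ω, 0 ≤ psum g k ω ∧ psum g k ω ≤ k := fun k ω => by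
    constructor
    · exact sum_nonneg fun i _ => hg0 i ω
    · unfold psum
      refine (sum_le_sum fun i _ => (hgb i ω).trans hb2).trans ?_
      simp
  have hwk : ∀ k, Measurable[ℱ k] (psum w k) := fun k => by
    unfold psum
    refine Finset.measurable_fun_sum _ fun i hi => ?_
    exact (hwm i).mono (ℱ.mono (by simp at hi; omega)) le_rfl
  have hgk : ∀ k, Measurable[ℱ k] (psum g k) := fun k => by
    unfold psum
    refine Finset.measurable_fun_sum _ fun i hi => ?_
    exact (hgm i).mono (ℱ.mono (by simp at hi; omega)) le_rfl
  set M : ℕ → Ω → ℝ := fun k ω => Real.exp (s * (psum w k ω - psum g k ω) / b - psum g k ω) with hM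
  have hMm : ∀ k, Measurable[ℱ k] (M k) := fun k =>
    Real.measurable_exp.comp (((((hwk k).sub (hgk k)).const_mul s).div_const b).sub (hgk k))
  have hMb : ∀ k ω, |M k ω| ≤ Real.exp (k / b) := fun k ω => by
    rw [abs_of_nonneg (Real.exp_pos _).le]
    refine Real.exp_le_exp.2 ?_
    have h1 := hPw k ω
    have h2 := hPg k ω
    have h3 : s * (psum w k ω - psum g k ω) ≤ k := by
      refine (le_abs_self _).trans ?_
      rw [abs_mul, hs, one_mul, abs_le]
      constructor <;> linarith [h1.1, h1.2, h2.1, h2.2]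
    have h4 : s * (psum w k ω - psum g k ω) / b ≤ k / b := by gcongr
    linarith [h2.1]
  have hMi : ∀ k, Integrable (M k) μ := fun k =>
    integrable_of_bdd ((hMm k).mono (ℱ.le k) le_rfl) (hMb k)
  refine ⟨hMi k, ?_⟩
  induction k with
  | zero => simp [psum_zero]
  | succ k ih =>
    set Z0 : Ω → ℝ := fun ω => M k ω * Real.exp (-(s * g k ω / b + g k ω)) with hZ0
    set Z1 : Ω → ℝ := fun ω => Z0 ω * (s / b + 1) with hZ1
    have hZ0m : Measurable[ℱ k] Z0 :=
      (hMm k).mul (Real.measurable_exp.comp ((((hgm k).const_mul s).div_const b).add (hgm k)).neg)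
    have hZ1m : Measurable[ℱ k] Z1 := hZ0m.mul_const _
    have hgs : ∀ ω, |s * g k ω / b| ≤ 1 := fun ω => by
      rw [abs_div, abs_mul, hs, one_mul, abs_of_nonneg (hg0 k ω), abs_of_pos hb, div_le_one hb]
      nlinarith [hgb k ω]
    have hZ0b : ∀ ω, |Z0 ω| ≤ Real.exp (k / b) * Real.exp 1 := fun ω => by
      rw [hZ0, abs_mul, abs_of_nonneg (Real.exp_pos (-(s * g k ω / b + g k ω))).le]
      refine mul_le_mul (hMb k ω) (Real.exp_le_exp.2 ?_) (Real.exp_pos _).le (Real.exp_pos _).le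
      have := (abs_le.1 (hgs ω)).1
      linarith [hg0 k ω]
    have hZ1b : ∀ ω, |Z1 ω| ≤ Real.exp (k / b) * Real.exp 1 * |s / b + 1| := fun ω => by
      rw [hZ1, abs_mul]
      exact mul_le_mul_of_nonneg_right (hZ0b ω) (abs_nonneg _)
    have hZ0p : ∀ ω, 0 < Z0 ω := fun ω => by simp only [hZ0, hM]; positivity
    have iw : Integrable (w k) μ := integrable_of_bdd (C := 1) ((hwm k).mono (ℱ.le _) le_rfl) fun ω => by
      rw [abs_of_nonneg (hw0 k ω)]; exact (hwb k ω).trans hb2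
    have ig : Integrable (g k) μ := integrable_of_bdd (C := 1) ((hgm k).mono (ℱ.le _) le_rfl) fun ω => by
      rw [abs_of_nonneg (hg0 k ω)]; exact (hgb k ω).trans hb2
    have iZ0 : Integrable Z0 μ := integrable_of_bdd (hZ0m.mono (ℱ.le _) le_rfl) hZ0b
    have iZw : Integrable (fun ω => Z1 ω * w k ω) μ :=
      integrable_bdd_mul (hZ1m.mono (ℱ.le _) le_rfl) hZ1b iw
    have iZg : Integrable (fun ω => Z1 ω * g k ω) μ :=
      integrable_bdd_mul (hZ1m.mono (ℱ.le _) le_rfl) hZ1b ig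
    have h1 : ∀ ω, M (k + 1) ω ≤ Z0 ω + Z1 ω * w k ω := by
      intro ω
      have e : M (k + 1) ω = Z0 ω * Real.exp (s * w k ω / b) := by
        simp only [hM, hZ0, psum_succ]
        rw [← Real.exp_add, ← Real.exp_add]
        congr 1
        ring
      have hx : |s * w k ω / b| ≤ 1 := by
        rw [abs_div, abs_mul, hs, one_mul, abs_of_nonneg (hw0 k ω), abs_of_pos hb, div_le_one hb]
        nlinarith [hwb k ω]
      have h2 := (abs_le.1 (Real.abs_exp_sub_one_sub_id_le hx)).2
      have h3 : (s * w k ω / b) ^ 2 ≤ w k ω := by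
        rw [div_pow, mul_pow, hss, one_mul, div_le_iff₀ (by positivity)]
        nlinarith [hwb k ω, hw0 k ω]
      rw [e]
      have h4 : Real.exp (s * w k ω / b) ≤ 1 + (s / b + 1) * w k ω := by
        have : (s / b + 1) * w k ω = s * w k ω / b + w k ω := by ring
        linarith
      calc Z0 ω * Real.exp (s * w k ω / b) ≤ Z0 ω * (1 + (s / b + 1) * w k ω) :=
            mul_le_mul_of_nonneg_left h4 (hZ0p ω).le
        _ = _ := by simp only [hZ1]; ring
    have h5 : ∀ ω, Z0 ω + Z1 ω * g k ω ≤ M k ω := by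
      intro ω
      have h6 := Real.add_one_le_exp (s * g k ω / b + g k ω)
      have e : M k ω = Z0 ω * Real.exp (s * g k ω / b + g k ω) := by
        simp only [hZ0]
        rw [mul_assoc, ← Real.exp_add]; simp
      rw [e]
      calc Z0 ω + Z1 ω * g k ω = Z0 ω * (s * g k ω / b + g k ω + 1) := by simp only [hZ1]; ring
        _ ≤ _ := mul_le_mul_of_nonneg_left h6 (hZ0p ω).le
    calc ∫ ω, M (k + 1) ω ∂μ ≤ ∫ ω, (Z0 ω + Z1 ω * w k ω) ∂μ :=
          integral_mono (hMi _) (iZ0.add iZw) h1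
      _ = ∫ ω, (Z0 ω + Z1 ω * g k ω) ∂μ := by
          rw [integral_add iZ0 iZw, integral_add iZ0 iZg, hwg k Z1 _ hZ1m hZ1b]
      _ ≤ ∫ ω, M k ω ∂μ := integral_mono (iZ0.add iZg) (hMi k) h5
      _ ≤ 1 := ih

lemma exp_tail {Ω : Type} {mΩ : MeasurableSpace Ω} (μ : Measure Ω) [IsProbabilityMeasure μ]
    (f : Ω → ℝ) (hi : Integrable (fun ω => Real.exp (f ω)) μ) (h1 : ∫ ω, Real.exp (f ω) ∂μ ≤ 1) (t : ℝ) :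
    μ.real {ω | t ≤ f ω} ≤ Real.exp (-t) := by
  have h := mul_meas_ge_le_integral_of_nonneg (μ := μ) (f := fun ω => Real.exp (f ω))
    (ae_of_all _ fun ω => (Real.exp_pos _).le) hi (Real.exp t)
  have e : {ω | Real.exp t ≤ Real.exp (f ω)} = {ω | t ≤ f ω} := by
    ext ω; simp
  rw [e] at h
  rw [Real.exp_neg, ← one_div, le_div_iff₀ (Real.exp_pos t), mul_comm]
  exact h.trans h1

lemma exp_small (β : ℝ) (hβ : 0 < β) : ∃ C : ℝ, 0 < C ∧ ∀ ε : ℝ, 0 < ε → ε ≤ 1 →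
    Real.exp (-(ε ^ (-β))) ≤ C * ε := by
  obtain ⟨k, hk⟩ := exists_nat_ge (1 / β)
  refine ⟨k.factorial, by positivity, ?_⟩
  intro ε hε hε1
  have h1 := Real.pow_div_factorial_le_exp (ε ^ (-β)) (by positivity) k
  have h2 : ε⁻¹ ≤ (ε ^ (-β)) ^ k := by
    rw [← Real.rpow_natCast, ← Real.rpow_mul hε.le, ← Real.rpow_neg_one]
    refine Real.rpow_le_rpow_of_exponent_ge hε hε1 ?_
    rw [div_le_iff₀ hβ] at hk
    linarith
  have hf : (0:ℝ) < k.factorial := by positivity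
  rw [Real.exp_neg, inv_le_comm₀ (Real.exp_pos _) (by positivity), mul_inv]
  refine le_trans ?_ h1
  rw [div_eq_inv_mul]
  gcongr

lemma cond_int {Ω : Type} {m mΩ : MeasurableSpace Ω} (μ : Measure Ω) [IsProbabilityMeasure μ]
    (hm : m ≤ mΩ) (Z f : Ω → ℝ) (hZ : Measurable[m] Z) (hf : Integrable f μ)
    (hZf : Integrable (fun ω => Z ω * f ω) μ) :
    ∫ ω, Z ω * f ω ∂μ = ∫ ω, Z ω * (μ[f | m]) ω ∂μ := by
  have h1 := condExp_mul_of_stronglyMeasurable_left (μ := μ) (m := m) (f := Z) (g := f)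
    hZ.stronglyMeasurable hZf hf
  calc ∫ ω, Z ω * f ω ∂μ = ∫ ω, (μ[Z * f | m]) ω ∂μ := (integral_condExp hm).symm
    _ = _ := integral_congr_ae h1

lemma trunc_cond {Ω : Type} {m mΩ : MeasurableSpace Ω} (μ : Measure Ω) [IsProbabilityMeasure μ]
    (hm : m ≤ mΩ) (w : Ω → ℝ) (c : ℝ) (hw : Measurable w) (hw0 : ∀ ω, 0 ≤ w ω) (hwc : ∀ ω, w ω ≤ c) :
    ∃ g : Ω → ℝ, Measurable[m] g ∧ (∀ ω, 0 ≤ g ω) ∧ (∀ ω, g ω ≤ c) ∧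
      ∀ (Z : Ω → ℝ) (d : ℝ), Measurable[m] Z → (∀ ω, |Z ω| ≤ d) →
        ∫ ω, Z ω * w ω ∂μ = ∫ ω, Z ω * g ω ∂μ := by
  have iw : Integrable w μ := integrable_of_bdd (C := c) hw fun ω => by
    rw [abs_of_nonneg (hw0 ω)]; exact hwc ω
  have hc : 0 ≤ c ∨ IsEmpty Ω := by
    by_cases h : Nonempty Ω
    · obtain ⟨ω⟩ := h
      exact Or.inl ((hw0 ω).trans (hwc ω))
    · exact Or.inr (not_nonempty_iff.1 h)
  have hc : ∀ ω : Ω, 0 ≤ c := fun ω => (hw0 ω).trans (hwc ω)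
  refine ⟨fun ω => min (max ((μ[w | m]) ω) 0) c,
    (stronglyMeasurable_condExp.measurable.max measurable_const).min measurable_const,
    fun ω => le_min (le_max_right _ _) (hc ω), fun ω => min_le_right _ _, ?_⟩
  intro Z d hZ hd
  rw [cond_int μ hm Z w hZ iw (integrable_bdd_mul (hZ.mono hm le_rfl) hd iw)]
  have h1 : 0 ≤ᵐ[μ] μ[w | m] := condExp_nonneg (ae_of_all _ hw0)
  have h2 : μ[w | m] ≤ᵐ[μ] μ[fun _ => c | m] :=
    condExp_mono iw (integrable_const c) (ae_of_all _ hwc)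
  rw [condExp_const hm] at h2
  refine integral_congr_ae ?_
  filter_upwards [h1, h2] with ω a1 a2
  have a1' : 0 ≤ (μ[w | m]) ω := a1
  rw [max_eq_left a1', min_eq_left a2]

lemma markov {Ω : Type} {mΩ : MeasurableSpace Ω} (μ : Measure Ω) [IsProbabilityMeasure μ]
    (f : Ω → ℝ) (h0 : ∀ ω, 0 ≤ f ω) (hi : Integrable f μ) (t : ℝ) (ht : 0 < t) :
    μ.real {ω | t < f ω} ≤ (∫ ω, f ω ∂μ) / t := by
  have h := mul_meas_ge_le_integral_of_nonneg (μ := μ) (ae_of_all _ h0) hi t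
  rw [le_div_iff₀ ht, mul_comm]
  refine le_trans (mul_le_mul_of_nonneg_left (measureReal_mono ?_) ht.le) h
  intro ω hω
  exact le_of_lt (show t < f ω from hω)

lemma selfnorm (p : ℝ) (hp : 1 < p) : ∃ C : ℝ, 0 < C ∧
    ∀ {Ω : Type} {mΩ : MeasurableSpace Ω} (μ : Measure Ω) [IsProbabilityMeasure μ]
      (ℱ : Filtration ℕ mΩ) (Y v : ℕ → Ω → ℝ) (_ : MDS μ ℱ Y v) (n : ℕ) (ε : ℝ),
      0 < ε → ε ≤ 1 →
      (∀ i < n, Integrable (fun ω => |Y i ω| ^ (2 * p)) μ) →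
      ∑ i ∈ range n, ∫ ω, |Y i ω| ^ (2 * p) ∂μ ≤ ε ^ (2 * p + 1) →
      μ.real {ω | ε ^ 2 < |psum v n ω - 1|} ≤ ε →
      μ.real {ω | 3 * ε < |psum (fun i ω => Y i ω ^ 2) n ω - psum v n ω|} ≤ C * ε := by
  set β := 1 / (2 * p - 2) with hβ
  have hβ0 : 0 < β := by rw [hβ]; apply one_div_pos.2; linarith
  obtain ⟨C0, hC0, hexp⟩ := exp_small β hβ0
  refine ⟨3 + 2 * (Real.exp 3 * C0), by positivity, ?_⟩
  intro Ω mΩ μ _ ℱ Y v hM n ε hε hε1 hYp hYs hbad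
  set b := ε ^ (1 + β) with hb
  have hb0 : 0 < b := by positivity
  have hb1 : b ≤ 1 := Real.rpow_le_one hε.le hε1 (by linarith)
  set w : ℕ → Ω → ℝ := fun i ω => if |Y i ω| ≤ b then Y i ω ^ 2 else 0 with hw
  have hwm : ∀ i, Measurable[ℱ (i + 1)] (w i) := fun i =>
    Measurable.ite (measurableSet_le
      (continuous_abs.measurable.comp (hM.Ym i)) measurable_const) ((hM.Ym i).pow_const 2)
      measurable_const
  have hw0 : ∀ i ω, 0 ≤ w i ω := fun i ω => by
    simp only [hw]; split_ifs <;> positivity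
  have hwb : ∀ i ω, w i ω ≤ b ^ 2 := fun i ω => by
    simp only [hw]; split_ifs with h
    · rw [← sq_abs]; exact pow_le_pow_left₀ (abs_nonneg _) h 2
    · positivity
  have hwY : ∀ i ω, w i ω ≤ Y i ω ^ 2 := fun i ω => by
    simp only [hw]; split_ifs
    · exact le_rfl
    · positivity
  choose g hgm hg0 hgb hwg using fun i => trunc_cond μ (ℱ.le i) (w i) (b ^ 2)
    ((hwm i).mono (ℱ.le _) le_rfl) (hw0 i) (hwb i)
  have hwM : ∀ i, Measurable (w i) := fun i => (hwm i).mono (ℱ.le _) le_rfl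
  have hgM : ∀ i, Measurable (g i) := fun i => (hgm i).mono (ℱ.le _) le_rfl
  have iw : ∀ i, Integrable (w i) μ := fun i => integrable_of_bdd (C := b ^ 2) (hwM i) fun ω => by
    rw [abs_of_nonneg (hw0 i ω)]; exact hwb i ω
  have ig : ∀ i, Integrable (g i) μ := fun i => integrable_of_bdd (C := b ^ 2) (hgM i) fun ω => by
    rw [abs_of_nonneg (hg0 i ω)]; exact hgb i ω
  have ir : ∀ i, Integrable (fun ω => Y i ω ^ 2 - w i ω) μ := fun i => (hM.Y2i i).sub (iw i)
  -- tail sums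
  have hrest : ∀ i < n, ∫ ω, (Y i ω ^ 2 - w i ω) ∂μ ≤ b ^ (2 - 2 * p) * ∫ ω, |Y i ω| ^ (2 * p) ∂μ := by
    intro i hi
    rw [← integral_const_mul]
    refine integral_mono (ir i) ((hYp i hi).const_mul _) fun ω => ?_
    simp only [hw]
    split_ifs with h
    · rw [sub_self]; positivity
    · push Not at h
      have hY0 : 0 < |Y i ω| := hb0.trans h
      rw [sub_zero, ← sq_abs]
      have e : |Y i ω| ^ (2 * p) = |Y i ω| ^ 2 * |Y i ω| ^ (2 * p - 2) := by
        rw [← Real.rpow_natCast, ← Real.rpow_add hY0]; congr 1; push_cast; ring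
      have h2 : b ^ (2 * p - 2) ≤ |Y i ω| ^ (2 * p - 2) :=
        Real.rpow_le_rpow hb0.le h.le (by linarith)
      have h3 : b ^ (2 - 2 * p) * b ^ (2 * p - 2) = 1 := by
        rw [← Real.rpow_add hb0, show 2 - 2 * p + (2 * p - 2) = 0 by ring, Real.rpow_zero]
      rw [e]
      calc |Y i ω| ^ 2 = |Y i ω| ^ 2 * (b ^ (2 - 2 * p) * b ^ (2 * p - 2)) := by rw [h3, mul_one]
        _ ≤ |Y i ω| ^ 2 * (b ^ (2 - 2 * p) * |Y i ω| ^ (2 * p - 2)) := by gcongr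
        _ = _ := by ring
  have hrs : ∑ i ∈ range n, ∫ ω, (Y i ω ^ 2 - w i ω) ∂μ ≤ ε ^ 2 := by
    refine (sum_le_sum fun i hi => hrest i (mem_range.1 hi)).trans ?_
    rw [← mul_sum]
    refine (mul_le_mul_of_nonneg_left hYs (by positivity)).trans (le_of_eq ?_)
    rw [hb, ← Real.rpow_mul hε.le, ← Real.rpow_add hε, ← Real.rpow_two]
    congr 1
    have hp2 : 2 * p - 2 ≠ 0 := sub_ne_zero.2 (by linarith)
    have e : β * (2 - 2 * p) = -1 := by
      rw [hβ, one_div, show (2 - 2 * p) = -(2 * p - 2) by ring, mul_neg, inv_mul_cancel₀ hp2]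
    have : (1 + β) * (2 - 2 * p) = (2 - 2 * p) + β * (2 - 2 * p) := by ring
    rw [this, e]; ring
  -- |Q - W|
  have hQ : μ.real {ω | ε < ∑ i ∈ range n, (Y i ω ^ 2 - w i ω)} ≤ ε := by
    refine (markov μ _ (fun ω => sum_nonneg fun i _ => sub_nonneg.2 (hwY i ω))
      (integrable_finsetSum _ fun i _ => ir i) ε hε).trans ?_
    rw [div_le_iff₀ hε, integral_finsetSum _ fun i _ => ir i]
    nlinarith
  -- |V - G|
  have ivg : ∀ i, Integrable (fun ω => |v i ω - g i ω|) μ := fun i => ((hM.vi i).sub (ig i)).abs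
  have hvg : ∀ i, ∫ ω, |v i ω - g i ω| ∂μ ≤ ∫ ω, (Y i ω ^ 2 - w i ω) ∂μ := by
    intro i
    set Z : Ω → ℝ := fun ω => if g i ω ≤ v i ω then 1 else -1 with hZ
    have hZm : Measurable[ℱ i] Z := Measurable.ite (measurableSet_le (hgm i) (hM.vm i))
      measurable_const measurable_const
    have hZM := hZm.mono (ℱ.le _) le_rfl
    have hZb : ∀ ω, |Z ω| ≤ 1 := fun ω => by simp only [hZ]; split_ifs <;> simp
    have j1 := integrable_bdd_mul hZM hZb (hM.vi i)
    have j2 := integrable_bdd_mul hZM hZb (ig i)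
    have j3 := integrable_bdd_mul hZM hZb (hM.Y2i i)
    have j4 := integrable_bdd_mul hZM hZb (iw i)
    calc ∫ ω, |v i ω - g i ω| ∂μ = ∫ ω, (Z ω * v i ω - Z ω * g i ω) ∂μ := by
          congr 1; ext ω
          simp only [hZ]
          split_ifs with h
          · rw [abs_of_nonneg (by linarith)]; ring
          · push Not at h
            rw [abs_of_neg (by linarith)]; ring
      _ = ∫ ω, (Z ω * Y i ω ^ 2 - Z ω * w i ω) ∂μ := by
          rw [integral_sub j1 j2, integral_sub j3 j4, hM.var i Z 1 hZm hZb, hwg i Z 1 hZm hZb]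
      _ ≤ _ := by
          refine integral_mono (j3.sub j4) (ir i) fun ω => ?_
          have h1 := hwY i ω
          have h2 := (abs_le.1 (hZb ω)).2
          simp only []
          nlinarith
  have hV : μ.real {ω | ε < ∑ i ∈ range n, |v i ω - g i ω|} ≤ ε := by
    refine (markov μ _ (fun ω => sum_nonneg fun i _ => abs_nonneg _)
      (integrable_finsetSum _ fun i _ => ivg i) ε hε).trans ?_
    rw [div_le_iff₀ hε, integral_finsetSum _ fun i _ => ivg i]
    have := sum_le_sum fun i (_ : i ∈ range n) => hvg i
    nlinarith
  have hmart : ∀ s : ℝ, |s| = 1 →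
      μ.real {ω | ε ^ (-β) - 3 ≤ s * (psum w n ω - psum g n ω) / b - psum g n ω}
        ≤ Real.exp 3 * C0 * ε := by
    intro s hs
    obtain ⟨h1, h2⟩ := exp_mart μ ℱ w g b s hb0 hb1 hs hwm hgm hw0 hwb hg0 hgb hwg n
    refine (exp_tail μ _ h1 h2 _).trans ?_
    rw [neg_sub, sub_eq_add_neg, Real.exp_add, mul_assoc]
    exact mul_le_mul_of_nonneg_left (hexp ε hε hε1) (Real.exp_pos _).le
  have hsub : {ω | 3 * ε < |psum (fun i ω => Y i ω ^ 2) n ω - psum v n ω|} ⊆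
      ((({ω | ε < ∑ i ∈ range n, (Y i ω ^ 2 - w i ω)} ∪ {ω | ε < ∑ i ∈ range n, |v i ω - g i ω|}) ∪
      {ω | ε ^ 2 < |psum v n ω - 1|}) ∪
      {ω | ε ^ (-β) - 3 ≤ 1 * (psum w n ω - psum g n ω) / b - psum g n ω}) ∪
      {ω | ε ^ (-β) - 3 ≤ (-1) * (psum w n ω - psum g n ω) / b - psum g n ω} := by
    intro ω hω
    by_contra hcon
    simp only [Set.mem_union, Set.mem_ofPred_eq, not_or, not_lt, not_le] at hω hcon
    obtain ⟨⟨⟨⟨c1, c2⟩, c3⟩, c4⟩, c5⟩ := hcon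
    have d1 : psum (fun i ω => Y i ω ^ 2) n ω - psum w n ω = ∑ i ∈ range n, (Y i ω ^ 2 - w i ω) := by
      simp [psum, sum_sub_distrib]
    have d1' : 0 ≤ ∑ i ∈ range n, (Y i ω ^ 2 - w i ω) :=
      sum_nonneg fun i _ => sub_nonneg.2 (hwY i ω)
    have d2 : |psum v n ω - psum g n ω| ≤ ε := by
      refine le_trans ?_ c2
      rw [show psum v n ω - psum g n ω = ∑ i ∈ range n, (v i ω - g i ω) by
        simp [psum, sum_sub_distrib]]
      exact abs_sum_le_sum_abs _ _
    have d3 := abs_le.1 c3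
    have d4 := abs_le.1 d2
    have hε2 : ε ^ 2 ≤ 1 := by nlinarith
    have hg3 : psum g n ω ≤ 3 := by linarith [d3.2, d4.1]
    have hεb : ε ^ (-β) = ε / b := by
      rw [hb, show ε / ε ^ (1 + β) = ε ^ (1:ℝ) / ε ^ (1 + β) by rw [Real.rpow_one], ← Real.rpow_sub hε]
      congr 1; ring
    rw [hεb] at c4 c5
    have f4 : 1 * (psum w n ω - psum g n ω) / b < ε / b := by linarith
    have f5 : (-1) * (psum w n ω - psum g n ω) / b < ε / b := by linarith
    rw [div_lt_div_iff_of_pos_right hb0] at f4 f5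
    have : |psum (fun i ω => Y i ω ^ 2) n ω - psum v n ω| ≤ 3 * ε := by
      rw [abs_le]
      constructor <;> linarith [d4.1, d4.2]
    linarith
  refine (measureReal_mono hsub).trans ?_
  refine (measureReal_union_le _ _).trans ?_
  have u1 := measureReal_union_le (μ := μ) ((({ω | ε < ∑ i ∈ range n, (Y i ω ^ 2 - w i ω)} ∪ {ω | ε < ∑ i ∈ range n, |v i ω - g i ω|}) ∪
      {ω | ε ^ 2 < |psum v n ω - 1|}))
      {ω | ε ^ (-β) - 3 ≤ 1 * (psum w n ω - psum g n ω) / b - psum g n ω}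
  have u2 := measureReal_union_le (μ := μ) ({ω | ε < ∑ i ∈ range n, (Y i ω ^ 2 - w i ω)} ∪ {ω | ε < ∑ i ∈ range n, |v i ω - g i ω|})
      {ω | ε ^ 2 < |psum v n ω - 1|}
  have u3 := measureReal_union_le (μ := μ) {ω | ε < ∑ i ∈ range n, (Y i ω ^ 2 - w i ω)} {ω | ε < ∑ i ∈ range n, |v i ω - g i ω|}
  have m1 := hmart 1 (by simp)
  have m2 := hmart (-1) (by simp)
  linarith

lemma sqrt_near (W d : ℝ) (h : |W - 1| ≤ d) : |Real.sqrt W - 1| ≤ d := by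
  refine le_trans ?_ h
  by_cases hW : 0 ≤ W
  · have h1 : W - 1 = (Real.sqrt W - 1) * (Real.sqrt W + 1) := by
      nlinarith [Real.mul_self_sqrt hW]
    rw [h1, abs_mul]
    have h2 : 1 ≤ |Real.sqrt W + 1| := by
      rw [abs_of_nonneg (by positivity)]
      linarith [Real.sqrt_nonneg W]
    nlinarith [abs_nonneg (Real.sqrt W - 1)]
  · push Not at hW
    rw [Real.sqrt_eq_zero_of_nonpos hW.le, zero_sub, abs_neg, abs_one, abs_of_neg (by linarith)]
    linarith

lemma final_mds (p : ℝ) (hp : 1 < p) : ∃ C : ℝ, 0 < C ∧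
    ∀ {Ω : Type} {mΩ : MeasurableSpace Ω} (μ : Measure Ω) [IsProbabilityMeasure μ]
      (ℱ : Filtration ℕ mΩ) (Y v : ℕ → Ω → ℝ) (_ : MDS μ ℱ Y v) (n : ℕ) (ε : ℝ),
      0 < ε →
      (∀ i < n, Integrable (fun ω => |Y i ω| ^ (2 * p)) μ) →
      ∑ i ∈ range n, ∫ ω, |Y i ω| ^ (2 * p) ∂μ ≤ ε ^ (2 * p + 1) →
      μ.real {ω | ε ^ 2 < |psum v n ω - 1|} ≤ ε →
      ∀ t1 t2 : ℝ, 0 ≤ t1 → 0 ≤ t2 → t1 + t2 ≤ 1 → ∀ x : ℝ,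
      |μ.real {ω | psum Y n ω ≤ x * Real.sqrt (t1 * psum v n ω +
        t2 * psum (fun i ω => Y i ω ^ 2) n ω + (1 - t1 - t2))} - stdNormalCDF x| ≤ C * ε := by
  obtain ⟨B, hB, hcore⟩ := core_B p hp
  obtain ⟨D, hD, hself⟩ := selfnorm p hp
  refine ⟨B + D + 9, by positivity, ?_⟩
  intro Ω mΩ μ _ ℱ Y v hM n ε hε hYp hYs hbad t1 t2 ht1 ht2 ht x
  set A := {ω | psum Y n ω ≤ x * Real.sqrt (t1 * psum v n ω +
        t2 * psum (fun i ω => Y i ω ^ 2) n ω + (1 - t1 - t2))} with hA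
  by_cases h8 : 1 < 8 * ε
  · have a1 : 0 ≤ μ.real A := measureReal_nonneg
    have a2 : μ.real A ≤ 1 := measureReal_le_one
    have a3 := cdf_nonneg x
    have a4 := cdf_le_one x
    have : |μ.real A - stdNormalCDF x| ≤ 1 := by
      rw [abs_le]; constructor <;> linarith
    nlinarith
  push Not at h8
  have hε1 : ε ≤ 1 := by linarith
  have hs := hself μ ℱ Y v hM n ε hε hε1 hYp hYs hbad
  have hc := hcore μ ℱ Y v hM n ε hε hε1 hYp hYs hbad
  set E := {ω | ε ^ 2 < |psum v n ω - 1|} ∪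
    {ω | 3 * ε < |psum (fun i ω => Y i ω ^ 2) n ω - psum v n ω|} with hE
  have hEm : μ.real E ≤ (D + 1) * ε := by
    refine (measureReal_union_le _ _).trans ?_
    linarith
  have hgood : ∀ ω, ω ∉ E → |Real.sqrt (t1 * psum v n ω +
        t2 * psum (fun i ω => Y i ω ^ 2) n ω + (1 - t1 - t2)) - 1| ≤ 4 * ε := by
    intro ω hω
    simp only [hE, Set.mem_union, Set.mem_ofPred_eq, not_or, not_lt] at hω
    obtain ⟨h1, h2⟩ := hω
    apply sqrt_near
    have e : t1 * psum v n ω + t2 * psum (fun i ω => Y i ω ^ 2) n ω + (1 - t1 - t2) - 1 =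
        (t1 + t2) * (psum v n ω - 1) + t2 * (psum (fun i ω => Y i ω ^ 2) n ω - psum v n ω) := by ring
    rw [e]
    refine (abs_add_le _ _).trans ?_
    rw [abs_mul, abs_mul, abs_of_nonneg (add_nonneg ht1 ht2), abs_of_nonneg ht2]
    have k1 : (t1 + t2) * |psum v n ω - 1| ≤ 1 * ε ^ 2 :=
      mul_le_mul ht h1 (abs_nonneg _) zero_le_one
    have k2 : t2 * |psum (fun i ω => Y i ω ^ 2) n ω - psum v n ω| ≤ 1 * (3 * ε) :=
      mul_le_mul (by linarith) h2 (abs_nonneg _) zero_le_one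
    nlinarith
  have hch : ∃ a b : ℝ, 1 / 2 ≤ a ∧ 1 / 2 ≤ b ∧ |a - 1| ≤ 4 * ε ∧ |b - 1| ≤ 4 * ε ∧
      ∀ r, |r - 1| ≤ 4 * ε → x * a ≤ x * r ∧ x * r ≤ x * b := by
    have e1 : |(1 - 4 * ε) - 1| ≤ 4 * ε := by
      rw [abs_le]; constructor <;> linarith
    have e2 : |(1 + 4 * ε) - 1| ≤ 4 * ε := by
      rw [abs_le]; constructor <;> linarith
    rcases le_total 0 x with hx | hx
    · refine ⟨1 - 4 * ε, 1 + 4 * ε, by linarith, by linarith, e1, e2, fun r hr => ?_⟩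
      rw [abs_le] at hr
      exact ⟨mul_le_mul_of_nonneg_left (by linarith) hx,
        mul_le_mul_of_nonneg_left (by linarith) hx⟩
    · refine ⟨1 + 4 * ε, 1 - 4 * ε, by linarith, by linarith, e2, e1, fun r hr => ?_⟩
      rw [abs_le] at hr
      exact ⟨mul_le_mul_of_nonpos_left (by linarith) hx,
        mul_le_mul_of_nonpos_left (by linarith) hx⟩
  obtain ⟨a, b, ha, hb, ha1, hb1, hab⟩ := hch
  have s1 := cdf_scale x a (1 / 2) (by norm_num) (by norm_num) ha
  have s2 := cdf_scale x b (1 / 2) (by norm_num) (by norm_num) hb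
  have u1 : μ.real A ≤ μ.real {ω | psum Y n ω ≤ x * b} + μ.real E := by
    apply meas_diff_le
    intro ω hω
    by_cases h : ω ∈ E
    · exact Or.inr h
    · exact Or.inl (le_trans (show psum Y n ω ≤ _ from hω) (hab _ (hgood ω h)).2)
  have u2 : μ.real {ω | psum Y n ω ≤ x * a} ≤ μ.real A + μ.real E := by
    apply meas_diff_le
    intro ω hω
    by_cases h : ω ∈ E
    · exact Or.inr h
    · exact Or.inl (le_trans (show psum Y n ω ≤ _ from hω) (hab _ (hgood ω h)).1)
  have c1 := abs_le.1 (hc (x * a))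
  have c2 := abs_le.1 (hc (x * b))
  have s1' := abs_le.1 s1
  have s2' := abs_le.1 s2
  rw [abs_le]
  constructor
  · nlinarith [s1'.1, c1.1]
  · nlinarith [s2'.2, c2.2]

lemma mds_of_problem {Ω : Type} {mΩ : MeasurableSpace Ω} (μ : Measure Ω) [IsProbabilityMeasure μ]
    (ℱ : Filtration ℕ mΩ) (n : ℕ) (X : ℕ → Ω → ℝ)
    (hXm : ∀ i, StronglyMeasurable[ℱ i] (X i)) (hXi : ∀ i, Integrable (X i) μ)
    (hX0 : ∀ i < n, μ[X (i + 1) | ℱ i] =ᵐ[μ] (0 : Ω → ℝ))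
    (hX2 : ∀ i < n, Integrable (fun ω => X (i + 1) ω ^ 2) μ) :
    MDS μ ℱ (fun i ω => if i < n then X (i + 1) ω else 0)
      (fun i ω => if i < n then max ((μ[fun ω' => X (i + 1) ω' ^ 2 | ℱ i]) ω) 0 else 0) := by
  constructor
  · intro i
    by_cases h : i < n
    · simp only [h, if_true]; exact (hXm (i + 1)).measurable
    · simp only [h, if_false]; exact measurable_const
  · intro i
    by_cases h : i < n
    · simp only [h, if_true]; exact stronglyMeasurable_condExp.measurable.max measurable_const
    · simp only [h, if_false]; exact measurable_const
  · intro i ω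
    by_cases h : i < n
    · simp only [h, if_true]; exact le_max_right _ _
    · simp only [h, if_false]; exact le_rfl
  · intro i
    by_cases h : i < n
    · simp only [h, if_true]; exact hXi (i + 1)
    · simp only [h, if_false]; exact integrable_const _
  · intro i
    by_cases h : i < n
    · simp only [h, if_true]; exact hX2 i h
    · simp only [h, if_false]; exact integrable_const _
  · intro i
    by_cases h : i < n
    · simp only [h, if_true]
      exact integrable_condExp.sup (integrable_const 0)
    · simp only [h, if_false]; exact integrable_const _
  · intro i Z hZ hZY
    by_cases h : i < n
    · simp only [h, if_true] at hZY ⊢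
      rw [cond_int μ (ℱ.le i) Z (X (i + 1)) hZ (hXi _) hZY]
      rw [← integral_zero Ω ℝ (μ := μ)]
      refine integral_congr_ae ?_
      filter_upwards [hX0 i h] with ω hω
      rw [hω]; simp
    · simp [h]
  · intro i Z c hZ hc
    by_cases h : i < n
    · simp only [h, if_true]
      rw [cond_int μ (ℱ.le i) Z (fun ω => X (i + 1) ω ^ 2) hZ (hX2 i h)
        (integrable_bdd_mul (hZ.mono (ℱ.le i) le_rfl) hc (hX2 i h))]
      have h1 : 0 ≤ᵐ[μ] μ[fun ω => X (i + 1) ω ^ 2 | ℱ i] :=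
        condExp_nonneg (ae_of_all _ fun ω => sq_nonneg _)
      refine integral_congr_ae ?_
      filter_upwards [h1] with ω a1
      have a2 : 0 ≤ (μ[fun ω => X (i + 1) ω ^ 2 | ℱ i]) ω := a1
      rw [max_eq_left a2]
    · simp [h]

lemma sum_shift (n : ℕ) (f : ℕ → ℝ) : ∑ i ∈ Finset.Icc 1 n, f i = ∑ i ∈ range n, f (i + 1) := by
  induction n with
  | zero => simp
  | succ k ih => rw [sum_range_succ, ← ih, Finset.sum_Icc_succ_top (by omega)]

lemma memLp_sq (p : ℝ) (hp : 1 < p) {Ω : Type} {mΩ : MeasurableSpace Ω} (μ : Measure Ω)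
    [IsProbabilityMeasure μ] (X : Ω → ℝ) (hX : Measurable X)
    (hi : Integrable (fun ω => |X ω| ^ (2 * p)) μ) :
    MemLp (fun ω => X ω ^ 2) (ENNReal.ofReal p) μ := by
  have hp0 : 0 < p := by linarith
  rw [← integrable_norm_rpow_iff (hX.pow_const 2).aestronglyMeasurable
    (by simpa using hp0) ENNReal.ofReal_ne_top]
  rw [ENNReal.toReal_ofReal hp0.le]
  refine hi.congr (ae_of_all _ fun ω => ?_)
  simp only [Real.norm_eq_abs, abs_pow]
  rw [Real.rpow_mul (abs_nonneg _), Real.rpow_two]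

theorem stmt0 (p : ℝ) (hp : 1 < p) :
    ∃ C : ℝ, 0 < C ∧
      ∀ (Ω : Type) (mΩ : MeasurableSpace Ω) (μ : Measure Ω),
        IsProbabilityMeasure μ →
        ∀ (ℱ : Filtration ℕ mΩ), ℱ 0 = ⊥ →
        ∀ (n : ℕ) (X : ℕ → Ω → ℝ), X 0 = 0 →
        (∀ i, StronglyMeasurable[ℱ i] (X i)) →
        (∀ i, Integrable (X i) μ) →
        (∀ i ∈ Finset.Icc 1 n, μ[X i | ℱ (i - 1)] =ᵐ[μ] (0 : Ω → ℝ)) →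
        ∀ (S : ℕ → Ω → ℝ), (∀ k ω, S k ω = ∑ i ∈ Finset.Icc 1 k, X i ω) →
        ∀ (QV CV : Ω → ℝ),
          (∀ ω, QV ω = ∑ i ∈ Finset.Icc 1 n, (X i ω) ^ 2) →
          (∀ ω, CV ω = ∑ i ∈ Finset.Icc 1 n, (μ[fun ω' => (X i ω') ^ 2 | ℱ (i - 1)]) ω) →
        (∫ ω, (S n ω) ^ 2 ∂μ) = 1 →
        (∀ i ∈ Finset.Icc 1 n, Integrable (fun ω => |X i ω| ^ (2 * p)) μ) →
        ∀ (N : ℝ),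
          N = (∑ i ∈ Finset.Icc 1 n, ∫ ω, |X i ω| ^ (2 * p) ∂μ) + (∫ ω, |CV ω - 1| ^ p ∂μ) →
      ∀ t1 t2 : ℝ, 0 ≤ t1 → 0 ≤ t2 → t1 ≤ 1 → t2 ≤ 1 → t1 + t2 ≤ 1 →
      ∀ x : ℝ,
        |(μ {ω | S n ω ≤ x * Real.sqrt (t1 * CV ω + t2 * QV ω + (1 - t1 - t2))}).toReal
          - stdNormalCDF x| ≤ C * N ^ (1 / (2 * p + 1)) := by
  obtain ⟨C, hC, hfin⟩ := final_mds p hp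
  refine ⟨C, hC, ?_⟩
  intro Ω mΩ μ hμ ℱ _ n X _ hXm hXi hXc S hS QV CV hQV hCV _ hXp N hN t1 t2 ht1 ht2 _ _ ht x
  have hp0 : 0 < p := by linarith
  have hXM : ∀ i, Measurable (X i) := fun i => (hXm i).measurable.mono (ℱ.le i) le_rfl
  have hmem : ∀ i < n, i + 1 ∈ Finset.Icc 1 n := fun i hi => by
    rw [Finset.mem_Icc]; omega
  have hL : ∀ i < n, MemLp (fun ω => X (i + 1) ω ^ 2) (ENNReal.ofReal p) μ := fun i hi =>
    memLp_sq p hp μ (X (i + 1)) (hXM _) (hXp (i + 1) (hmem i hi))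
  have h1p : (1 : ENNReal) ≤ ENNReal.ofReal p := by
    rw [← ENNReal.ofReal_one]; exact ENNReal.ofReal_le_ofReal hp.le
  have hX2 : ∀ i < n, Integrable (fun ω => X (i + 1) ω ^ 2) μ := fun i hi => (hL i hi).integrable h1p
  have hM := mds_of_problem μ ℱ n X hXm hXi
    (fun i hi => by simpa using hXc (i + 1) (hmem i hi)) hX2
  set Y : ℕ → Ω → ℝ := fun i ω => if i < n then X (i + 1) ω else 0 with hY
  set v : ℕ → Ω → ℝ := fun i ω =>
    if i < n then max ((μ[fun ω' => X (i + 1) ω' ^ 2 | ℱ i]) ω) 0 else 0 with hv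
  have hYX : ∀ i < n, ∀ ω, Y i ω = X (i + 1) ω := fun i hi ω => by simp [hY, hi]
  have hSY : ∀ ω, S n ω = psum Y n ω := fun ω => by
    rw [hS, sum_shift]
    exact sum_congr rfl fun i hi => (hYX i (mem_range.1 hi) ω).symm
  have hQY : ∀ ω, QV ω = psum (fun i ω => Y i ω ^ 2) n ω := fun ω => by
    rw [hQV, sum_shift]
    exact sum_congr rfl fun i hi => by simp only [hYX i (mem_range.1 hi) ω]
  have hCe : ∀ ω, CV ω = ∑ i ∈ range n, (μ[fun ω' => (X (i + 1) ω') ^ 2 | ℱ i]) ω := fun ω => by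
    rw [hCV, sum_shift]; simp
  have hall : ∀ᵐ ω ∂μ, ∀ i : ℕ, 0 ≤ (μ[fun ω' => (X (i + 1) ω') ^ 2 | ℱ i]) ω := by
    rw [ae_all_iff]
    intro i
    have h1 : 0 ≤ᵐ[μ] μ[fun ω => X (i + 1) ω ^ 2 | ℱ i] :=
      condExp_nonneg (ae_of_all _ fun ω => sq_nonneg _)
    exact h1
  have hCY : ∀ᵐ ω ∂μ, CV ω = psum v n ω := by
    filter_upwards [hall] with ω hω
    rw [hCe]
    refine sum_congr rfl fun i hi => ?_
    simp only [hv, mem_range.1 hi, if_true]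
    rw [max_eq_left (hω i)]
  have hCL : MemLp (fun ω => CV ω - 1) (ENNReal.ofReal p) μ := by
    have h1 : MemLp (fun ω => ∑ i ∈ range n, (μ[fun ω' => (X (i + 1) ω') ^ 2 | ℱ i]) ω)
        (ENNReal.ofReal p) μ :=
      memLp_finsetSum _ fun i hi => MemLp.condExp h1p (hL i (mem_range.1 hi))
    have h2 : CV = fun ω => ∑ i ∈ range n, (μ[fun ω' => (X (i + 1) ω') ^ 2 | ℱ i]) ω :=
      funext hCe
    rw [← h2] at h1
    exact h1.sub (memLp_const 1)
  have hCi : Integrable (fun ω => |CV ω - 1| ^ p) μ := by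
    have := hCL.integrable_norm_rpow (by simpa using hp0) ENNReal.ofReal_ne_top
    rw [ENNReal.toReal_ofReal hp0.le] at this
    exact this
  have hC0 : 0 ≤ ∫ ω, |CV ω - 1| ^ p ∂μ := integral_nonneg fun ω => by positivity
  have hYsum : ∑ i ∈ Finset.Icc 1 n, ∫ ω, |X i ω| ^ (2 * p) ∂μ
      = ∑ i ∈ range n, ∫ ω, |Y i ω| ^ (2 * p) ∂μ := by
    rw [sum_shift n (fun i => ∫ ω, |X i ω| ^ (2 * p) ∂μ)]
    refine sum_congr rfl fun i hi => ?_
    simp only [hYX i (mem_range.1 hi)]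
  have hY0 : 0 ≤ ∑ i ∈ range n, ∫ ω, |Y i ω| ^ (2 * p) ∂μ :=
    sum_nonneg fun i _ => integral_nonneg fun ω => by positivity
  rw [hYsum] at hN
  have hYp : ∀ i < n, Integrable (fun ω => |Y i ω| ^ (2 * p)) μ := fun i hi => by
    simp only [hYX i hi]; exact hXp (i + 1) (hmem i hi)
  have hev : μ {ω | S n ω ≤ x * Real.sqrt (t1 * CV ω + t2 * QV ω + (1 - t1 - t2))} =
      μ {ω | psum Y n ω ≤ x * Real.sqrt (t1 * psum v n ω +
        t2 * psum (fun i ω => Y i ω ^ 2) n ω + (1 - t1 - t2))} := by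
    refine measure_congr ?_
    filter_upwards [hCY] with ω hω
    refine propext ?_
    change S n ω ≤ _ ↔ psum Y n ω ≤ _
    rw [hSY, hQY, hω]
  have key : ∀ ε : ℝ, 0 < ε → N ≤ ε ^ (2 * p + 1) →
      |(μ {ω | S n ω ≤ x * Real.sqrt (t1 * CV ω + t2 * QV ω + (1 - t1 - t2))}).toReal
          - stdNormalCDF x| ≤ C * ε := by
    intro ε hε hNε
    rw [hev]
    refine hfin μ ℱ Y v hM n ε hε hYp (by linarith) ?_ t1 t2 ht1 ht2 ht x
    have e1 : μ.real {ω | ε ^ 2 < |psum v n ω - 1|} = μ.real {ω | ε ^ 2 < |CV ω - 1|} := by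
      refine measureReal_congr ?_
      filter_upwards [hCY] with ω hω
      refine propext ?_
      change ε ^ 2 < |psum v n ω - 1| ↔ ε ^ 2 < |CV ω - 1|
      rw [hω]
    rw [e1]
    have e2 : {ω | ε ^ 2 < |CV ω - 1|} ⊆ {ω | ε ^ (2 * p) < |CV ω - 1| ^ p} := by
      intro ω hω
      have hω' : ε ^ 2 < |CV ω - 1| := hω
      change ε ^ (2 * p) < |CV ω - 1| ^ p
      rw [Real.rpow_mul hε.le, Real.rpow_two]
      exact Real.rpow_lt_rpow (by positivity) hω' hp0
    refine (measureReal_mono e2).trans ?_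
    have hpos : 0 < ε ^ (2 * p) := by positivity
    refine (markov μ (fun ω => |CV ω - 1| ^ p) (fun ω => by positivity) hCi _ hpos).trans ?_
    rw [div_le_iff₀ hpos]
    have e3 : ε ^ (2 * p + 1) = ε * ε ^ (2 * p) := by
      rw [Real.rpow_add hε, Real.rpow_one, mul_comm]
    rw [← e3]; linarith
  have hN0 : 0 ≤ N := by linarith
  have hq : 2 * p + 1 ≠ 0 := by positivity
  rcases hN0.eq_or_lt with h | h
  · rw [← h, Real.zero_rpow (by positivity), mul_zero]
    refine le_of_forall_pos_le_add fun δ hδ => ?_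
    have := key (δ / C) (by positivity) (by rw [← h]; positivity)
    rw [mul_div_cancel₀ _ hC.ne'] at this
    linarith
  · refine key _ (by positivity) (le_of_eq ?_)
    rw [← Real.rpow_mul h.le, one_div, inv_mul_cancel₀ hq, Real.rpow_one]
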